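/- Let κ be a field, T an indeterminate, and k = κ(T). Let α : G → Aut(L/k) be a finite embedding problem over k, and let T' = (T₁,…,Tₙ) be a tuple of algebraically independent indeterminates over k (n ≥ 1). Suppose the induced embedding problem α_{k(T')} has a solution with solution field E, and suppose that every element of E algebraic over κ lies in L (i.e., E ∩ κ̄ = L ∩ κ̄). Let B denote the integral closure of k[T₁,…,Tₙ] in E. Then there exist t ∈ kⁿ and a maximal ideal P of B lying over ⟨T₁ − t₁, …, Tₙ − tₙ⟩ such that the residue field E_t = B/P (which contains the image of L) is the solution field of a solution β to α which is regular, i.e., every element of E_t algebraic over κ lies in L. -/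

import Mathlib

set_option synthInstance.maxHeartbeats 1000000
set_option maxHeartbeats 1000000
set_option linter.style.haveILetI false
set_option linter.unusedVariables false


section PartI
open Polynomial

lemma aux_sum_inj (s : ℕ) (f : Fin s → ℕ) (hf : Function.Injective f) :
    s * (s - 1) / 2 ≤ ∑ i, f i := by
  classical
  have h1 : ∑ i, f i = ∑ x ∈ Finset.univ.image f, x := by
    rw [Finset.sum_image (fun a _ b _ h => hf h)]
  have key : ∀ (t : Finset ℕ), ∑ i ∈ Finset.range t.card, i ≤ ∑ x ∈ t, x := by
    intro t
    induction t using Finset.induction_on_max with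
    | empty => simp
    | insert a t ha ih =>
      have hna : a ∉ t := fun h => lt_irrefl _ (ha a h)
      rw [Finset.card_insert_of_notMem hna, Finset.sum_range_succ, Finset.sum_insert hna]
      have : t.card ≤ a := by
        have hsub : t ⊆ Finset.range a := fun x hx => Finset.mem_range.2 (ha x hx)
        simpa using Finset.card_le_card hsub
      omega
  have h2 := key (Finset.univ.image f)
  rw [Finset.card_image_of_injective _ hf, Finset.card_univ, Fintype.card_fin,
    Finset.sum_range_id] at h2
  omega

lemma aux_det_dvd {O : Type*} [CommRing O] (s : ℕ) (q : Fin s → O[X]) (w : Fin s → O) (τ : O)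
    (hw : ∀ i, τ ∣ w i) :
    τ ^ (s * (s - 1) / 2) ∣ Matrix.det (Matrix.of fun a i => (q a).eval (w i)) := by
  classical
  choose w' hw' using hw
  obtain ⟨J, hJ⟩ : ∃ J, ∀ a, (q a).natDegree < J := by
    refine ⟨∑ a, (q a).natDegree + 1, fun a => ?_⟩
    have := Finset.single_le_sum (f := fun a => (q a).natDegree) (fun _ _ => Nat.zero_le _)
      (Finset.mem_univ a)
    omega
  have hM : (Matrix.of fun a i => (q a).eval (w i)) =
      fun a => ∑ j : Fin J, ((q a).coeff j * τ ^ (j : ℕ)) • (fun i : Fin s => w' i ^ (j : ℕ)) := by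
    funext a i
    rw [Matrix.of_apply, Polynomial.eval_eq_sum_range' (hJ a), Finset.sum_apply,
      ← Fin.sum_univ_eq_sum_range]
    refine Finset.sum_congr rfl fun j _ => ?_
    simp only [Pi.smul_apply, smul_eq_mul, hw', mul_pow]
    ring
  rw [hM]
  change _ ∣ Matrix.detRowAlternating.toMultilinearMap _
  rw [MultilinearMap.map_sum]
  refine Finset.dvd_sum fun r _ => ?_
  rw [MultilinearMap.map_smul_univ]
  by_cases hr : Function.Injective r
  · refine Dvd.dvd.mul_right ?_ _
    rw [Finset.prod_mul_distrib]
    refine Dvd.dvd.mul_left ?_ _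
    rw [Finset.prod_pow_eq_pow_sum]
    exact pow_dvd_pow _ (aux_sum_inj s (fun i => (r i : ℕ)) (fun a b h => hr (Fin.ext h)))
  · simp only [Function.Injective, not_forall] at hr
    obtain ⟨a, b, hab, hne⟩ := hr
    have : Matrix.detRowAlternating.toMultilinearMap
        (fun i => fun i_1 : Fin s => w' i_1 ^ (r i : ℕ)) = 0 :=
      Matrix.detRowAlternating.map_eq_zero_of_eq _ (by simp [hab]) hne
    rw [this, smul_zero]
    exact dvd_zero _

lemma aux_det_dvd' {O : Type*} [CommRing O] (s : ℕ) (q : Fin s → O[X]) (w : Fin s → O) (τ T : O)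
    (hw : ∀ i, τ ∣ w i) (M : Matrix (Fin s) (Fin s) O) (L N : ℕ) (hN : N ≤ L)
    (hM : ∀ a i, T ^ L ∣ M a i - (q a).eval (w i))
    (hτ : T ^ N ∣ τ ^ (s * (s - 1) / 2)) : T ^ N ∣ M.det := by
  have h1 := hτ.trans (aux_det_dvd s q w τ hw)
  set M' : Matrix (Fin s) (Fin s) O := Matrix.of fun a i => (q a).eval (w i) with hM'
  have h2 : T ^ L ∣ M.det - M'.det := by
    rw [← Ideal.mem_span_singleton, ← Ideal.Quotient.mk_eq_mk_iff_sub_mem,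
      RingHom.map_det, RingHom.map_det]
    congr 1
    ext a i
    simp only [RingHom.mapMatrix_apply, Matrix.map_apply]
    rw [Ideal.Quotient.mk_eq_mk_iff_sub_mem, Ideal.mem_span_singleton]
    exact hM a i
  have h3 := ((pow_dvd_pow T hN).trans h2).add h1
  simpa using h3

lemma aux_evalcomp {O : Type*} [CommRing O] (p : O[X][X]) (a b : O[X]) (u : O) :
    ((p.map (compRingHom a)).eval b).eval u = p.evalEval (a.eval u) (b.eval u) := by
  induction p using Polynomial.induction_on' with
  | add p q hp hq => simp only [Polynomial.map_add, eval_add, hp, hq, evalEval_add]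
  | monomial j a => simp [evalEval, eval_comp]

lemma aux_approx0 {O : Type*} [CommRing O] [IsDomain O] (T : O) (H : O[X][X]) (δ : O) (hδ : δ ≠ 0)
    (h00 : (H.coeff 0).coeff 0 = 0) (h01 : (H.coeff 1).coeff 0 = δ) (L : ℕ) :
    ∃ Φ : O[X], ∀ u v : O, T ∣ u → T ∣ v → H.evalEval (δ ^ 2 * u) (δ * v) = 0 →
      T ^ L ∣ v - Φ.eval u ∧ T ∣ Φ.eval u := by
  set K0 := (H.coeff 0).divX with hK0
  set K1 := (H.coeff 1).divX with hK1
  set H2 := H.divX.divX with hH2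
  have e0 : K0 * X = H.coeff 0 := by
    have := divX_mul_X_add (H.coeff 0); rw [h00] at this; simpa using this
  have e1 : K1 * X + C δ = H.coeff 1 := by
    have := divX_mul_X_add (H.coeff 1); rw [h01] at this; simpa using this
  have e2 : H = (H2 * X + C (H.coeff 1)) * X + C (H.coeff 0) := by
    conv_lhs => rw [← divX_mul_X_add H, ← divX_mul_X_add H.divX]
    simp [hH2, coeff_divX]
  have ev : ∀ a b : O, H.evalEval a b = (H2.evalEval a b * b + (K1.eval a * a + δ)) * b
      + K0.eval a * a := by
    intro a b
    rw [e2, ← e0, ← e1]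
    simp [evalEval]
  induction L with
  | zero => exact ⟨0, fun u v hu hv _ => by simp⟩
  | succ l ih =>
    obtain ⟨Φ, hΦ⟩ := ih
    refine ⟨-(X * K0.comp (C (δ^2) * X) + C δ * X * Φ * K1.comp (C (δ^2) * X)
      + Φ ^ 2 * (H2.map (compRingHom (C (δ^2) * X))).eval (C δ * Φ)), fun u v hu hv h => ?_⟩
    obtain ⟨h1, h2⟩ := hΦ u v hu hv h
    set w := Φ.eval u with hw
    have e3 : ((H2.map (compRingHom (C (δ^2) * X))).eval (C δ * Φ)).eval u
        = H2.evalEval (δ ^ 2 * u) (δ * w) := by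
      rw [aux_evalcomp]; simp [hw]
    have e4 : v = - (u * K0.eval (δ ^2 * u) + δ * u * v * K1.eval (δ^2*u)
        + v^2 * H2.evalEval (δ ^ 2 * u) (δ * v)) := by
      rw [ev] at h
      have : δ ^ 2 * (v + (u * K0.eval (δ ^2 * u) + δ * u * v * K1.eval (δ^2*u)
        + v^2 * H2.evalEval (δ ^ 2 * u) (δ * v))) = 0 := by
        rw [← h]; ring
      have := (mul_eq_zero.1 this).resolve_left (pow_ne_zero 2 hδ)
      linear_combination this
    have e5 : (-(X * K0.comp (C (δ^2) * X) + C δ * X * Φ * K1.comp (C (δ^2) * X)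
      + Φ ^ 2 * (H2.map (compRingHom (C (δ^2) * X))).eval (C δ * Φ))).eval u =
      -(u * K0.eval (δ ^2 * u) + δ * u * w * K1.eval (δ^2*u)
        + w^2 * H2.evalEval (δ ^ 2 * u) (δ * w)) := by
      rw [← e3]
      simp [eval_comp, ← hw]
    rw [e5]
    constructor
    · obtain ⟨c, hc⟩ : δ * w - δ * v ∣ H2.evalEval (δ ^ 2 * u) (δ * w)
        - H2.evalEval (δ ^ 2 * u) (δ * v) := by
        rw [← map_evalRingHom_eval, ← map_evalRingHom_eval]
        exact sub_dvd_eval_sub _ _ _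
      have e6 : v - -(u * K0.eval (δ ^2 * u) + δ * u * w * K1.eval (δ^2*u)
        + w^2 * H2.evalEval (δ ^ 2 * u) (δ * w)) = (v - w) * (- u * (δ * K1.eval (δ^2*u))
          - w * (w * δ * c) - (w + v) * H2.evalEval (δ ^ 2 * u) (δ * v)) := by
        linear_combination e4 + w^2 * hc
      rw [e6, pow_succ]
      refine mul_dvd_mul h1 ?_
      refine dvd_sub (dvd_sub (Dvd.dvd.mul_right ((dvd_neg).2 hu) _) (h2.mul_right _))
        ((h2.add hv).mul_right _)
    · refine (dvd_neg).2 (dvd_add (dvd_add (hu.mul_right _) ?_) ?_)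
      · exact ((hu.mul_left _).mul_right _).mul_right _
      · exact (h2.trans (dvd_pow_self _ two_ne_zero)).mul_right _

lemma aux_approx {O : Type*} [CommRing O] [IsDomain O] (T : O) (h : O[X][X]) (t0 y0 : O)
    (hδ : (derivative h).evalEval t0 y0 ≠ 0)
    (h00 : h.evalEval t0 y0 = 0) (L : ℕ) :
    ∃ Φ : O[X], ∀ u v : O, T ∣ u → T ∣ v →
      h.evalEval (t0 + (derivative h).evalEval t0 y0 ^ 2 * u)
        (y0 + (derivative h).evalEval t0 y0 * v) = 0 →
      T ^ L ∣ v - Φ.eval u := by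
  set δ := (derivative h).evalEval t0 y0 with hδ'
  set H : O[X][X] := (h.map (compRingHom (X + C t0))).comp (X + C (C y0)) with hH
  have ev : ∀ p : O[X][X], ∀ a b, ((p.map (compRingHom (X + C t0))).comp (X + C (C y0))).evalEval a b
      = p.evalEval (t0 + a) (y0 + b) := by
    intro p a b
    induction p using Polynomial.induction_on' with
    | add p q hp hq => simp only [Polynomial.map_add, add_comp, evalEval_add, hp, hq]
    | monomial j c => simp [evalEval, eval_comp, add_comm]
  have hd : derivative H = ((derivative h).map (compRingHom (X + C t0))).comp (X + C (C y0)) := by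
    rw [hH, derivative_comp, derivative_map]; simp
  have z0 : ∀ p : O[X][X], (p.coeff 0).coeff 0 = p.evalEval 0 0 := by
    intro p; simp [evalEval, coeff_zero_eq_eval_zero]
  obtain ⟨Φ, hΦ⟩ := aux_approx0 T H δ hδ (by rw [z0, ev]; simpa using h00) (by
    have : H.coeff 1 = (derivative H).coeff 0 := by simp [coeff_derivative]
    rw [this, z0, hd, ev]; simp [hδ']) L
  refine ⟨Φ, fun u v hu hv huv => (hΦ u v hu hv ?_).1⟩
  rw [ev]; exact huv

lemma aux_val {O : Type*} [CommRing O] [IsDomain O] (T : O) (hT : ∀ x, ¬ T ∣ x → IsUnit x)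
    (c : ℕ) (δ : O) (h : ¬ T ^ c ∣ δ) : δ * T ∣ T ^ c := by
  induction c generalizing δ with
  | zero => simp at h
  | succ c ih =>
    by_cases hd : T ∣ δ
    · obtain ⟨δ', rfl⟩ := hd
      have : ¬ T ^ c ∣ δ' := fun h' => h (by rw [pow_succ']; exact mul_dvd_mul_left _ h')
      have := ih δ' this
      rw [pow_succ', mul_assoc]
      exact mul_dvd_mul_left _ this
    · rw [(hT δ hd).mul_left_dvd, pow_succ]
      exact dvd_mul_left _ _

lemma aux_class_det {O : Type*} [CommRing O] [IsDomain O] (T : O) (hT : ∀ x, ¬ T ∣ x → IsUnit x)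
    (h : O[X][X]) (c m s : ℕ) (t y : Fin s → O) (t0 y0 : O) (hm : 2 * c ≤ m)
    (h0 : h.evalEval t0 y0 = 0) (hi : ∀ i, h.evalEval (t i) (y i) = 0)
    (hδ : ¬ T ^ c ∣ (derivative h).evalEval t0 y0)
    (ht : ∀ i, T ^ m ∣ t i - t0) (hy : ∀ i, T ^ c ∣ y i - y0) (p : Fin s → O[X][X]) :
    T ^ ((m - 2 * c) * (s * (s - 1) / 2)) ∣
      Matrix.det (Matrix.of fun a i => (p a).evalEval (t i) (y i)) := by
  have hδ0 : (derivative h).evalEval t0 y0 ≠ 0 := by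
    intro h'; rw [h'] at hδ; exact hδ (dvd_zero _)
  set N := (m - 2 * c) * (s * (s - 1) / 2) with hN
  obtain ⟨Φ, hΦ⟩ := aux_approx T h t0 y0 hδ0 h0 N
  obtain ⟨e, he⟩ := aux_val T hT c _ hδ
  set δ := (derivative h).evalEval t0 y0 with hδ'
  choose b hb using ht
  choose b' hb' using hy
  have hTm : T ^ m = T ^ (m - 2 * c) * (δ * T * e) ^ 2 := by
    rw [← he, ← pow_mul, ← pow_add]; congr 1; omega
  have ht' : ∀ i, t i = t0 + δ ^ 2 * (T ^ (m - 2 * c) * (T ^ 2 * e ^ 2 * b i)) := by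
    intro i
    have := hb i
    rw [hTm] at this
    linear_combination this
  have hy' : ∀ i, y i = y0 + δ * (T * (e * b' i)) := by
    intro i
    have := hb' i
    rw [he] at this
    linear_combination this
  refine aux_det_dvd' s (fun a => ((p a).map (compRingHom (C t0 + C (δ ^ 2) * X))).eval
    (C y0 + C δ * Φ)) (fun i => T ^ (m - 2 * c) * (T ^ 2 * e ^ 2 * b i)) (T ^ (m - 2 * c)) T
    (fun i => dvd_mul_right _ _) _ N N le_rfl ?_ ?_
  · intro a i
    have h1 := hΦ (T ^ (m - 2 * c) * (T ^ 2 * e ^ 2 * b i)) (T * (e * b' i))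
      ⟨T ^ (m - 2 * c) * (T * e ^ 2 * b i), by ring⟩ (dvd_mul_right _ _)
      (by rw [← ht', ← hy']; exact hi i)
    rw [Matrix.of_apply, aux_evalcomp]
    simp only [eval_add, eval_mul, eval_C, eval_X]
    rw [← ht', ← map_evalRingHom_eval, ← map_evalRingHom_eval]
    refine dvd_trans ?_ (sub_dvd_eval_sub _ _ _)
    rw [hy']
    refine h1.trans ⟨δ, by ring⟩
  · rw [← pow_mul]

/-- few classes of approximate roots -/
lemma aux_prod_not_dvd {O : Type*} [CommRing O] [IsDomain O] (T : O)
    (hT : ∀ x, ¬ T ∣ x → IsUnit x) (hT0 : T ≠ 0) (hTu : ¬ IsUnit T) {ι : Type*} (S : Finset ι)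
    (f : ι → O) (c : ℕ) (hf : ∀ i ∈ S, ¬ T ^ c ∣ f i) : ¬ T ^ (c * S.card + 1) ∣ ∏ i ∈ S, f i := by
  classical
  have key : (∏ i ∈ S, f i) ∣ T ^ (c * S.card) := by
    induction S using Finset.induction_on with
    | empty => simp
    | insert a S ha ih =>
      rw [Finset.prod_insert ha, Finset.card_insert_of_notMem ha, mul_add, mul_one, add_comm,
        pow_add]
      refine mul_dvd_mul ?_ (ih fun i hi => hf i (Finset.mem_insert_of_mem hi))
      exact (dvd_mul_right _ _).trans (aux_val T hT c _ (hf a (Finset.mem_insert_self _ _)))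
  intro h
  have := h.trans key
  rw [pow_dvd_pow_iff hT0 hTu] at this
  omega

lemma aux_vdm {O : Type*} [CommRing O] [IsDomain O] (d : ℕ) (p : O[X]) (hp : p.Monic)
    (hd : p.natDegree = d) (y : Fin (d + 1) → O) (a : O) (ha : ∀ i, a ∣ p.eval (y i)) :
    a ∣ ∏ i : Fin (d + 1), ∏ j ∈ Finset.Ioi i, (y j - y i) := by
  rw [← Matrix.det_vandermonde, Matrix.det_eval_matrixOfPolynomials_eq_det_vandermonde y
    (fun i => if i = Fin.last d then p else X ^ (i : ℕ))]
  · rw [Matrix.det_apply']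
    refine Finset.dvd_sum fun σ _ => Dvd.dvd.mul_left ?_ _
    refine dvd_trans ?_ (Finset.dvd_prod_of_mem _ (Finset.mem_univ (Fin.last d)))
    simpa using ha _
  · intro i; split_ifs with h
    · rw [h, hd]; rfl
    · simp
  · intro i; split_ifs with h
    · exact hp
    · exact monic_X_pow _

lemma aux_yclass {O : Type*} [CommRing O] [IsDomain O] (T : O)
    (hT : ∀ x, ¬ T ∣ x → IsUnit x) (hT0 : T ≠ 0) (hTu : ¬ IsUnit T) (d : ℕ) (p : O[X])
    (hp : p.Monic) (hd : p.natDegree = d) (c m : ℕ) (hm : c * (d + 1) ^ 2 < m)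
    (y : Fin (d + 1) → O) (ha : ∀ i, T ^ m ∣ p.eval (y i)) :
    ∃ i j, i ≠ j ∧ T ^ c ∣ y j - y i := by
  by_contra hcon
  push Not at hcon
  have h1 := aux_vdm d p hp hd y _ ha
  rw [Finset.prod_sigma'] at h1
  refine aux_prod_not_dvd T hT hT0 hTu _ _ c ?_ ((pow_dvd_pow T ?_).trans h1)
  · rintro ⟨i, j⟩ hij
    simp only [Finset.mem_sigma, Finset.mem_univ, Finset.mem_Ioi, true_and] at hij
    exact hcon i j hij.ne
  · refine lt_of_le_of_lt (Nat.mul_le_mul_left c ?_) hm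
    rw [Finset.card_sigma, sq]
    calc _ ≤ ∑ i : Fin (d + 1), (d + 1) := Finset.sum_le_sum fun i _ =>
          (Finset.card_le_univ _).trans (by simp)
      _ = _ := by simp

lemma aux_natDegree_det {F : Type*} [CommRing F] {n : Type*} [Fintype n] [DecidableEq n]
    (M : Matrix n n F[X]) (w : n → ℕ)
    (hM : ∀ a i, (M a i).natDegree ≤ w a) : M.det.natDegree ≤ ∑ a, w a := by
  classical
  rw [← Matrix.det_transpose, Matrix.det_apply']
  refine natDegree_sum_le_of_forall_le _ _ fun σ _ => ?_
  refine (natDegree_mul_le).trans ?_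
  have h1 : ((((Equiv.Perm.sign σ : ℤˣ) : ℤ) : F[X])).natDegree = 0 := natDegree_intCast _
  rw [h1, zero_add]
  refine (natDegree_prod_le _ _).trans ?_
  exact Finset.sum_le_sum fun i _ => hM _ _

lemma aux_minors {R : Type*} [CommRing R] [IsDomain R] {ι : Type*} (S : Set ι) (s : ℕ)
    (p : Fin s → ι → R)
    (hdet : ∀ u : Fin s → ι, (∀ i, u i ∈ S) → Matrix.det (Matrix.of fun a i => p a (u i)) = 0) :
    ∃ g : Fin s → R, g ≠ 0 ∧ ∀ x ∈ S, ∑ a, g a * p a x = 0 := by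
  classical
  let K := FractionRing R
  let v : ι → (Fin s → K) := fun x a => algebraMap R K (p a x)
  have hinj : Function.Injective (algebraMap R K) := IsFractionRing.injective R K
  by_cases hs : Submodule.span K (v '' S) = ⊤
  · exfalso
    obtain ⟨b, hb, hb1, hb2⟩ := exists_linearIndependent K (v '' S)
    have hb3 : Submodule.span K b = ⊤ := by rw [hb1, hs]
    let B := Module.Basis.mk hb2 (by simp [hb3])
    have hfin : Finite b := Module.Finite.finite_basis B
    have : Fintype b := Fintype.ofFinite b
    have hcard : Fintype.card b = s := by
      rw [← Module.finrank_eq_card_basis B]; simp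
    let e : Fin s ≃ b := (Fintype.equivFinOfCardEq hcard).symm
    have hx : ∀ i : Fin s, ∃ x ∈ S, v x = (e i : Fin s → K) := fun i => hb (e i).2
    choose u hu hu2 using hx
    have hli : LinearIndependent K (fun i => v (u i)) := by
      have := hb2.comp e e.injective
      have h3 : (fun i => v (u i)) = Subtype.val ∘ e := funext hu2
      rw [h3]
      exact this
    have h0 := hdet u hu
    have h1 : Matrix.det (Matrix.of fun i a => v (u i) a) = 0 := by
      rw [← Matrix.det_transpose]
      have := congrArg (algebraMap R K) h0
      rw [RingHom.map_det, map_zero] at this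
      exact this
    have h2 : IsUnit (Matrix.of fun i a => v (u i) a) := by
      rw [← Matrix.linearIndependent_rows_iff_isUnit]
      exact hli
    rw [Matrix.isUnit_iff_isUnit_det, h1] at h2
    exact not_isUnit_zero h2
  · obtain ⟨f, hf0, hf⟩ := Submodule.exists_le_ker_of_lt_top _ (lt_top_iff_ne_top.mpr hs)
    obtain ⟨b, hb⟩ := IsLocalization.exist_integer_multiples_of_finite (nonZeroDivisors R)
      (fun a : Fin s => f (Pi.single a 1))
    choose g hg using hb
    have hb0 : algebraMap R K b ≠ 0 := by
      rw [Ne, map_eq_zero_iff _ hinj]; exact nonZeroDivisors.ne_zero b.2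
    refine ⟨g, ?_, fun x hx => ?_⟩
    · intro hg0
      apply hf0
      apply LinearMap.pi_ext'
      intro a
      ext
      have := hg a
      rw [hg0] at this
      simp only [Pi.zero_apply, map_zero] at this
      rw [Algebra.smul_def] at this
      have := (mul_eq_zero.mp this.symm).resolve_left hb0
      simpa using this
    · have h1 : f (v x) = 0 := hf (Submodule.subset_span ⟨x, hx, rfl⟩)
      have h2 : v x = ∑ a, v x a • (Pi.single a (1 : K) : Fin s → K) := by
        conv_lhs => rw [pi_eq_sum_univ' (v x)]
      rw [h2, map_sum] at h1
      apply hinj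
      rw [map_sum, map_zero]
      have : ∑ a, algebraMap R K (g a * p a x) = algebraMap R K b * ∑ a, f (v x a • Pi.single a 1) := by
        rw [Finset.mul_sum]
        refine Finset.sum_congr rfl fun a _ => ?_
        have h3 := hg a
        rw [Algebra.smul_def] at h3
        rw [map_mul, hg a, map_smul, smul_eq_mul, Algebra.smul_def]
        simp only [v]; ring
      rw [this, h1, mul_zero]

lemma aux_res {R : Type*} [CommRing R] [IsDomain R] [UniqueFactorizationMonoid R]
    (h : R[X][X]) (hm : h.Monic) (hirr : Irreducible h) (d : ℕ) (hd : h.natDegree = d) (hd0 : 0 < d)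
    (A : ℕ) : ∃ B : ℕ, ∀ g : R[X][X], g ≠ 0 → g.natDegree < d → (∀ b, (g.coeff b).natDegree ≤ A) →
      ∀ S : Finset R, (∀ t ∈ S, ∃ y, h.evalEval t y = 0 ∧ g.evalEval t y = 0) → S.card ≤ B := by
  classical
  obtain ⟨M, hM⟩ : ∃ M, ∀ b, (h.coeff b).natDegree ≤ M := by
    refine ⟨h.support.sup fun b => (h.coeff b).natDegree, fun b => ?_⟩
    by_cases hb : b ∈ h.support
    · exact Finset.le_sup (f := fun b => (h.coeff b).natDegree) hb
    · rw [notMem_support_iff.mp hb]; simp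
  refine ⟨(d + d) * (M + A), fun g hg0 hgd hgA S hS => ?_⟩
  set r := resultant h g with hr
  have hr0 : r ≠ 0 := by
    let K := FractionRing R[X]
    have hinj : Function.Injective (algebraMap R[X] K) := IsFractionRing.injective _ K
    have hirr' : Irreducible (h.map (algebraMap R[X] K)) :=
      (hm.irreducible_iff_irreducible_map_fraction_map).mp hirr
    have hcop : IsCoprime (h.map (algebraMap R[X] K)) (g.map (algebraMap R[X] K)) := by
      rw [hirr'.coprime_iff_not_dvd]
      intro hdvd
      have h1 := natDegree_le_of_dvd hdvd ((Polynomial.map_ne_zero_iff hinj).mpr hg0)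
      rw [natDegree_map_eq_of_injective hinj, natDegree_map_eq_of_injective hinj] at h1
      omega
    have h1 := resultant_ne_zero _ _ hcop
    rw [natDegree_map_eq_of_injective hinj, natDegree_map_eq_of_injective hinj,
      resultant_map_map] at h1
    intro h0
    rw [← hr, h0] at h1
    simp at h1
  have hrd : r.natDegree ≤ (d + d) * (M + A) := by
    rw [hr, resultant]
    refine (aux_natDegree_det _ (fun _ => M + A) ?_).trans ?_
    · intro a i
      unfold sylvester
      simp only [Matrix.of_apply]
      induction i using Fin.addCases with
      | left i =>
        simp only [Fin.addCases_left]
        split_ifs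
        · exact (hgA _).trans (Nat.le_add_left _ _)
        · simp
      | right i =>
        simp only [Fin.addCases_right]
        split_ifs
        · exact (hM _).trans (Nat.le_add_right _ _)
        · simp
    · simp only [Finset.sum_const, Finset.card_univ, Fintype.card_fin, smul_eq_mul]
      apply Nat.mul_le_mul_right
      omega
  obtain ⟨a, b, -, -, hab⟩ := exists_mul_add_mul_eq_C_resultant h g le_rfl le_rfl (by omega)
  have hroot : S ⊆ r.roots.toFinset := by
    intro t ht
    obtain ⟨y, hy1, hy2⟩ := hS t ht
    rw [Multiset.mem_toFinset, mem_roots hr0, IsRoot.def]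
    have := congrArg (evalEval t y) hab
    rw [evalEval_add, evalEval_mul, evalEval_mul, hy1, hy2, evalEval_C] at this
    rw [hr, ← this]; ring
  calc S.card ≤ r.roots.toFinset.card := Finset.card_le_card hroot
    _ ≤ Multiset.card r.roots := Multiset.toFinset_card_le _
    _ ≤ _ := (card_roots' r).trans hrd

lemma aux_ps_zero {F : Type*} [Field F] (p : F[X]) (N : ℕ) (hN : p.natDegree < N)
    (h : (PowerSeries.X : PowerSeries F) ^ N ∣ (p : PowerSeries F)) : p = 0 := by
  ext j
  rw [PowerSeries.X_pow_dvd_iff] at h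
  by_cases hj : j < N
  · simpa using h j hj
  · simp [coeff_eq_zero_of_natDegree_lt (p := p) (n := j) (by omega)]

lemma aux_map_evalEval {R O : Type*} [CommRing R] [CommRing O] (f : R →+* O) (h : R[X][X])
    (x y : R) : f (h.evalEval x y) = (h.map (mapRingHom f)).evalEval (f x) (f y) := by
  rw [map_mapRingHom_evalEval]

lemma aux_fiber {R F : Type*} [CommRing R] [IsDomain R] [Field F]
    (ι : R →+* F[X]) (hι : Function.Injective ι)
    (h : R[X][X]) (d : ℕ) (hd0 : 0 < d)
    (c m A W μ B : ℕ) (hA : 0 < A) (hm : 2 * c ≤ m)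
    (hB : ∀ g : R[X][X], g ≠ 0 → g.natDegree < d → (∀ b, (g.coeff b).natDegree ≤ A) →
      ∀ S : Finset R, (∀ t ∈ S, ∃ y, h.evalEval t y = 0 ∧ g.evalEval t y = 0) → S.card ≤ B)
    (hnum : ∑ a : Fin A × Fin d, ((a.1 : ℕ) * W + a.2 * (μ * W)) <
      (m - 2 * c) * ((A * d) * (A * d - 1) / 2))
    (S : Finset R) (y : R → R) (hy : ∀ t ∈ S, h.evalEval t (y t) = 0)
    (hdt : ∀ t ∈ S, (ι t).natDegree ≤ W) (hdy : ∀ t ∈ S, (ι (y t)).natDegree ≤ μ * W)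
    (hδ : ∀ t ∈ S, ¬ (PowerSeries.X : PowerSeries F) ^ c ∣
      ((ι ((derivative h).evalEval t (y t)) : F[X]) : PowerSeries F))
    (hcl : ∀ t ∈ S, ∀ t' ∈ S, (PowerSeries.X : PowerSeries F) ^ m ∣ ((ι t : F[X]) : PowerSeries F) -
      ((ι t' : F[X]) : PowerSeries F))
    (hcy : ∀ t ∈ S, ∀ t' ∈ S, (PowerSeries.X : PowerSeries F) ^ c ∣
      ((ι (y t) : F[X]) : PowerSeries F) - ((ι (y t') : F[X]) : PowerSeries F)) :
    S.card ≤ B := by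
  classical
  let f : R →+* PowerSeries F := (coeToPowerSeries.ringHom (R := F)).comp ι
  have hTu : ∀ x : PowerSeries F, ¬ PowerSeries.X ∣ x → IsUnit x := by
    intro x hx
    rw [PowerSeries.X_dvd_iff] at hx
    rw [PowerSeries.isUnit_iff_constantCoeff]
    exact isUnit_iff_ne_zero.mpr hx
  have hs : 0 < A * d := Nat.mul_pos hA hd0
  let e : Fin (A * d) ≃ Fin A × Fin d := finProdFinEquiv.symm
  obtain ⟨g, hg0, hg⟩ := aux_minors (S : Set R) (A * d)
    (fun a t => t ^ ((e a).1 : ℕ) * y t ^ ((e a).2 : ℕ)) (by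
      intro u hu
      apply hι
      rw [map_zero]
      apply aux_ps_zero _ _ (lt_of_le_of_lt ?_ hnum)
      · have hu0 := hu ⟨0, hs⟩
        have := aux_class_det (PowerSeries.X : PowerSeries F) hTu (h.map (mapRingHom f)) c m (A * d)
          (fun i => f (u i)) (fun i => f (y (u i))) (f (u ⟨0, hs⟩)) (f (y (u ⟨0, hs⟩))) hm
          (by rw [← aux_map_evalEval, hy _ hu0, map_zero])
          (fun i => by rw [← aux_map_evalEval, hy _ (hu i), map_zero])
          (by
            rw [derivative_map, ← aux_map_evalEval]
            exact hδ _ hu0)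
          (fun i => hcl _ (hu i) _ hu0) (fun i => hcy _ (hu i) _ hu0)
          (fun a => C (X ^ ((e a).1 : ℕ)) * X ^ ((e a).2 : ℕ))
        convert this using 1
        change f _ = _
        rw [RingHom.map_det]
        congr 1
        ext a i : 2
        simp [evalEval]
      · rw [RingHom.map_det, ← e.sum_comp (fun a => ((a.1 : ℕ) * W + a.2 * (μ * W)))]
        apply aux_natDegree_det
        intro a i
        simp only [RingHom.mapMatrix_apply, Matrix.map_apply, Matrix.of_apply, map_mul, map_pow]
        refine natDegree_mul_le.trans (add_le_add ?_ ?_)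
        · exact natDegree_pow_le.trans (Nat.mul_le_mul_left _ (hdt _ (hu i)))
        · exact natDegree_pow_le.trans (Nat.mul_le_mul_left _ (hdy _ (hu i))))
  let G : R[X][X] := ∑ a, monomial ((e a).2 : ℕ) (monomial ((e a).1 : ℕ) (g a))
  have hco : ∀ a, (G.coeff (e a).2).coeff (e a).1 = g a := by
    intro a
    simp only [G, finsetSum_coeff, coeff_monomial]
    rw [Finset.sum_eq_single a]
    · simp
    · intro b _ hb
      split_ifs with h1
      · rw [coeff_monomial, if_neg]
        intro h2
        exact hb (e.injective (Prod.ext (Fin.ext h2) (Fin.ext h1)))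
      · simp
    · simp
  refine hB G ?_ ?_ ?_ S ?_
  · intro h0
    apply hg0
    ext a
    rw [← hco a, h0]; simp
  · refine lt_of_le_of_lt (natDegree_sum_le_of_forall_le (n := d - 1) _ _ fun a _ => ?_) (by omega)
    refine (natDegree_monomial_le _).trans ?_
    have := (e a).2.2
    omega
  · intro b
    simp only [G, finsetSum_coeff, coeff_monomial]
    refine natDegree_sum_le_of_forall_le _ _ fun a _ => ?_
    split_ifs
    · exact (natDegree_monomial_le _).trans (e a).1.2.le
    · simp
  · intro t ht
    refine ⟨y t, hy t ht, ?_⟩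
    rw [← hg t ht]
    simp only [G, evalEval, eval_finsetSum, eval_monomial, eval_mul, eval_pow, eval_C]
    exact Finset.sum_congr rfl fun a _ => by ring

lemma aux_class {R F : Type*} [CommRing R] [IsDomain R] [Field F]
    (ι : R →+* F[X]) (hι : Function.Injective ι)
    (h : R[X][X]) (hmon : h.Monic) (d : ℕ) (hd : h.natDegree = d) (hd0 : 0 < d)
    (c m A W μ B : ℕ) (hA : 0 < A) (hm : 2 * c ≤ m) (hm' : c * (d + 1) ^ 2 < m)
    (hB : ∀ g : R[X][X], g ≠ 0 → g.natDegree < d → (∀ b, (g.coeff b).natDegree ≤ A) →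
      ∀ S : Finset R, (∀ t ∈ S, ∃ y, h.evalEval t y = 0 ∧ g.evalEval t y = 0) → S.card ≤ B)
    (hnum : ∑ a : Fin A × Fin d, ((a.1 : ℕ) * W + a.2 * (μ * W)) <
      (m - 2 * c) * ((A * d) * (A * d - 1) / 2))
    (S : Finset R) (y : R → R) (hy : ∀ t ∈ S, h.evalEval t (y t) = 0)
    (hdt : ∀ t ∈ S, (ι t).natDegree ≤ W) (hdy : ∀ t ∈ S, (ι (y t)).natDegree ≤ μ * W)
    (hδ : ∀ t ∈ S, ¬ (PowerSeries.X : PowerSeries F) ^ c ∣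
      ((ι ((derivative h).evalEval t (y t)) : F[X]) : PowerSeries F))
    (hcl : ∀ t ∈ S, ∀ t' ∈ S, (PowerSeries.X : PowerSeries F) ^ m ∣ ((ι t : F[X]) : PowerSeries F) -
      ((ι t' : F[X]) : PowerSeries F)) :
    S.card ≤ B * d := by
  classical
  let f : R →+* PowerSeries F := (coeToPowerSeries.ringHom (R := F)).comp ι
  have hTu : ∀ x : PowerSeries F, ¬ PowerSeries.X ∣ x → IsUnit x := by
    intro x hx
    rw [PowerSeries.X_dvd_iff] at hx
    rw [PowerSeries.isUnit_iff_constantCoeff]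
    exact isUnit_iff_ne_zero.mpr hx
  let I : Ideal (PowerSeries F) := Ideal.span {PowerSeries.X ^ c}
  let cl : R → PowerSeries F ⧸ I := fun t => Ideal.Quotient.mk I (f (y t))
  have hclI : ∀ t t', cl t = cl t' → (PowerSeries.X : PowerSeries F) ^ c ∣ f (y t) - f (y t') := by
    intro t t' h
    rwa [← Ideal.mem_span_singleton, ← Ideal.Quotient.mk_eq_mk_iff_sub_mem]
  refine (Finset.card_le_mul_card_image (f := cl) S B ?_).trans (Nat.mul_le_mul_left _ ?_)
  · intro v hv
    have hsub : ∀ t ∈ S.filter (fun t => cl t = v), t ∈ S := fun t ht => (Finset.mem_filter.mp ht).1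
    apply aux_fiber ι hι h d hd0 c m A W μ B hA hm hB hnum (S.filter (fun t => cl t = v)) y
      (fun t ht => hy t (hsub t ht)) (fun t ht => hdt t (hsub t ht)) (fun t ht => hdy t (hsub t ht))
      (fun t ht => hδ t (hsub t ht)) (fun t ht t' ht' => hcl t (hsub t ht) t' (hsub t' ht'))
    intro t ht t' ht'
    exact hclI t t' ((Finset.mem_filter.mp ht).2.trans (Finset.mem_filter.mp ht').2.symm)
  · by_contra hcon
    push Not at hcon
    obtain ⟨U, hU, hUc⟩ := Finset.exists_subset_card_eq (Nat.succ_le_of_lt hcon)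
    let e : Fin (d + 1) ≃ U := (Finset.equivFinOfCardEq hUc).symm
    have hex : ∀ i, ∃ t ∈ S, cl t = e i := fun i => by
      simpa using hU (e i).2
    choose u hu hu2 using hex
    obtain ⟨i, j, hij, hdvd⟩ := aux_yclass (PowerSeries.X : PowerSeries F) hTu
      PowerSeries.X_ne_zero PowerSeries.X_prime.not_isUnit d
      ((h.map (mapRingHom f)).map (evalRingHom (f (u 0)))) ((hmon.map _).map _)
      (by rw [(hmon.map _).natDegree_map, hmon.natDegree_map, hd]) c m hm'
      (fun i => f (y (u i))) (by
        intro i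
        rw [eval_map, eval₂_evalRingHom]
        have h1 : (h.map (mapRingHom f)).evalEval (f (u i)) (f (y (u i))) = 0 := by
          rw [← aux_map_evalEval, hy _ (hu i), map_zero]
        have h2 : f (u 0) - f (u i) ∣ (h.map (mapRingHom f)).evalEval (f (u 0)) (f (y (u i)))
            - (h.map (mapRingHom f)).evalEval (f (u i)) (f (y (u i))) := sub_dvd_eval_sub _ _ _
        rw [h1, sub_zero] at h2
        exact (hcl _ (hu 0) _ (hu i)).trans h2)
    apply hij
    apply e.injective
    apply Subtype.ext
    rw [← hu2, ← hu2]
    symm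
    exact (Ideal.Quotient.mk_eq_mk_iff_sub_mem _ _).mpr (Ideal.mem_span_singleton.mpr hdvd)

lemma aux_root_deg {F : Type*} [CommRing F] [IsDomain F] (p : F[X][X]) (hp : p.Monic) (N : ℕ)
    (hN : ∀ b, (p.coeff b).natDegree ≤ N) (y : F[X]) (hy : p.eval y = 0) : y.natDegree ≤ N := by
  by_contra hcon
  push Not at hcon
  have hd : p.natDegree ≠ 0 := by
    intro h0
    rw [hp.natDegree_eq_zero] at h0
    rw [h0] at hy; simp at hy
  rw [hp.as_sum] at hy
  simp only [eval_add, eval_pow, eval_X, eval_finsetSum, eval_mul, eval_C] at hy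
  have h1 : y ^ p.natDegree = - ∑ i ∈ Finset.range p.natDegree, p.coeff i * y ^ i :=
    eq_neg_of_add_eq_zero_left hy
  have h2 : (y ^ p.natDegree).natDegree ≤ N + (p.natDegree - 1) * y.natDegree := by
    rw [h1, natDegree_neg]
    refine natDegree_sum_le_of_forall_le _ _ fun i hi => ?_
    refine natDegree_mul_le.trans (add_le_add (hN i) (natDegree_pow_le.trans ?_))
    apply Nat.mul_le_mul_right
    rw [Finset.mem_range] at hi; omega
  rw [natDegree_pow] at h2
  obtain ⟨k, hk⟩ := Nat.exists_eq_succ_of_ne_zero hd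
  rw [hk] at h2
  simp only [Nat.succ_eq_add_one, Nat.add_sub_cancel] at h2
  rw [add_mul, one_mul] at h2
  omega

lemma aux_coeff_bound {R F : Type*} [CommRing R] [CommRing F] (ι : R →+* F[X]) (p : R[X]) :
    ∃ M, ∀ t W, 1 ≤ W → (ι t).natDegree ≤ W → (ι (p.eval t)).natDegree ≤ M * W := by
  induction p using Polynomial.induction_on' with
  | add p q hp hq =>
    obtain ⟨M1, h1⟩ := hp
    obtain ⟨M2, h2⟩ := hq
    refine ⟨M1 + M2, fun t W hW ht => ?_⟩
    rw [eval_add, map_add, add_mul]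
    refine (natDegree_add_le _ _).trans (max_le ((h1 t W hW ht).trans ?_) ((h2 t W hW ht).trans ?_))
    · omega
    · omega
  | monomial j a =>
    refine ⟨(ι a).natDegree + j, fun t W hW ht => ?_⟩
    rw [eval_monomial, map_mul, map_pow, add_mul]
    refine natDegree_mul_le.trans (add_le_add ?_ (natDegree_pow_le.trans ?_))
    · nlinarith
    · exact Nat.mul_le_mul_left _ ht

lemma aux_ydeg {R F : Type*} [CommRing R] [CommRing F] [IsDomain F] (ι : R →+* F[X]) (h : R[X][X])
    (hmon : h.Monic) :
    ∃ μ, ∀ t y W, 1 ≤ W → (ι t).natDegree ≤ W → h.evalEval t y = 0 → (ι y).natDegree ≤ μ * W := by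
  classical
  choose M hM using fun b => aux_coeff_bound ι (h.coeff b)
  refine ⟨∑ b ∈ h.support, M b, fun t y W hW ht h0 => ?_⟩
  apply aux_root_deg ((h.map (evalRingHom t)).map ι) ((hmon.map _).map _)
  · intro b
    rw [coeff_map, coeff_map, coe_evalRingHom]
    by_cases hb : b ∈ h.support
    · refine (hM b t W hW ht).trans (Nat.mul_le_mul_right _ ?_)
      exact Finset.single_le_sum (f := M) (fun _ _ => Nat.zero_le _) hb
    · rw [notMem_support_iff.mp hb]; simp
  · rw [eval_map, eval₂_hom, eval_map, eval₂_evalRingHom, h0, map_zero]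

lemma aux_num (d μ c w q : ℕ) (hd : 2 ≤ d) (hq : 3 * w * (μ * d) + c * (4 * (μ * d) + 1) + c + 1 ≤ q) :
    ∑ a : Fin (2 * (μ * d) + 1) × Fin d, ((a.1 : ℕ) * (4 * q + w) + a.2 * (μ * (4 * q + w))) <
      (c + 3 * q - 2 * c) * (((2 * (μ * d) + 1) * d) * ((2 * (μ * d) + 1) * d - 1) / 2) := by
  set P := μ * d with hP
  set A := 2 * P + 1 with hA
  set W := 4 * q + w with hW
  have e1 : (∑ i : Fin A, (i : ℕ)) * 2 = A * (A - 1) := by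
    rw [Fin.sum_univ_eq_sum_range (fun i => i), Finset.sum_range_id_mul_two]
  have e2 : (∑ i : Fin d, (i : ℕ)) * 2 = d * (d - 1) := by
    rw [Fin.sum_univ_eq_sum_range (fun i => i), Finset.sum_range_id_mul_two]
  have e3 : ∑ a : Fin A × Fin d, ((a.1 : ℕ) * W + a.2 * (μ * W)) =
      d * ((∑ i : Fin A, (i : ℕ)) * W) + A * ((∑ i : Fin d, (i : ℕ)) * (μ * W)) := by
    rw [Fintype.sum_prod_type]
    simp only [Finset.sum_add_distrib, Finset.sum_const, Finset.card_univ, Fintype.card_fin,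
      smul_eq_mul, ← Finset.sum_mul, ← Finset.mul_sum]
  have e4 : A * d * (A * d - 1) / 2 * 2 = A * d * (A * d - 1) :=
    Nat.div_mul_cancel (Nat.even_mul_pred_self _).two_dvd
  have e5 : (c + 3 * q - 2 * c) = 3 * q - c := by omega
  rw [e5, e3]
  apply Nat.lt_of_mul_lt_mul_right (a := 2)
  have e6 : (d * ((∑ i : Fin A, (i : ℕ)) * W) + A * ((∑ i : Fin d, (i : ℕ)) * (μ * W))) * 2
      = A * d * (W * (A - 1 + μ * (d - 1))) := by
    calc _ = d * W * ((∑ i : Fin A, (i : ℕ)) * 2) + A * (μ * W) * ((∑ i : Fin d, (i : ℕ)) * 2) := by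
          ring
      _ = _ := by rw [e1, e2]; ring
  rw [e6, mul_assoc (3 * q - c), e4, mul_comm (3 * q - c), mul_assoc (A * d)]
  apply Nat.mul_lt_mul_of_pos_left
  · have f1 : A - 1 + μ * (d - 1) ≤ 3 * P := by
      have : μ * (d - 1) ≤ P := Nat.mul_le_mul_left _ (by omega)
      omega
    have f2 : 4 * P + 1 ≤ A * d - 1 := by
      have : A * 2 ≤ A * d := Nat.mul_le_mul_left _ hd
      omega
    calc W * (A - 1 + μ * (d - 1)) ≤ W * (3 * P) := Nat.mul_le_mul_left _ f1
      _ < (4 * P + 1) * (3 * q - c) := by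
          obtain ⟨r, hr⟩ : ∃ r, 3 * q = r + c := ⟨3 * q - c, by omega⟩
          rw [hr, Nat.add_sub_cancel]
          nlinarith
      _ ≤ _ := Nat.mul_le_mul_right _ f2
  · apply Nat.mul_pos <;> omega

def auxT {R : Type*} [CommRing R] (τ x0 : R) (c : ℕ) (ε : Finset ℕ) : R :=
  x0 + τ ^ c * ∑ i ∈ ε, τ ^ i

lemma auxT_inj {R F : Type*} [CommRing R] [Field F] (ι : R →+* F[X])
    (τ x0 : R) (hτ : ι τ = X) (c : ℕ) : Function.Injective (auxT τ x0 c) := by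
  intro ε ε' h
  have h1 := congrArg ι h
  simp only [auxT, map_add, map_mul, map_pow, map_sum, hτ] at h1
  have h2 := mul_left_cancel₀ (pow_ne_zero c X_ne_zero) (add_left_cancel h1)
  ext i
  have h3 := congrArg (fun p => coeff p i) h2
  simp only [finsetSum_coeff, coeff_X_pow, Finset.sum_ite_eq] at h3
  by_cases h4 : i ∈ ε <;> by_cases h5 : i ∈ ε' <;> simp_all

lemma aux_bad {R F : Type*} [CommRing R] [IsDomain R] [UniqueFactorizationMonoid R] [Field F]
    (ι : R →+* F[X]) (hι : Function.Injective ι) (τ : R) (hτ : ι τ = X)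
    (h : R[X][X]) (hmon : h.Monic) (hirr : Irreducible h) (hd : 2 ≤ h.natDegree)
    (a b : R[X][X]) (Δ : R[X]) (hab : a * h + b * derivative h = C Δ) (x0 : R) (c : ℕ)
    (hc : ¬ X ^ c ∣ ι (Δ.eval x0)) :
    ∃ C q0 : ℕ, ∀ q, q0 ≤ q → ∀ S ⊆ (Finset.range (4 * q)).powerset,
      (∀ ε ∈ S, ∃ y, h.evalEval (auxT τ x0 c ε) y = 0) → S.card ≤ C * 8 ^ q := by
  classical
  obtain ⟨d, hd'⟩ : ∃ d, h.natDegree = d := ⟨_, rfl⟩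
  obtain ⟨μ, hμ⟩ := aux_ydeg ι h hmon
  obtain ⟨B, hB⟩ := aux_res h hmon hirr d hd' (by omega) (2 * (μ * d) + 1)
  let w := (ι x0).natDegree + c + 1
  refine ⟨B * d, 3 * w * (μ * d) + c * (4 * (μ * d) + 1) + c + 1 + c * (d + 1) ^ 2, ?_⟩
  intro q hq S hS hbad
  have hW : ∀ ε ∈ S, (ι (auxT τ x0 c ε)).natDegree ≤ 4 * q + w := by
    intro ε hε
    simp only [auxT, map_add, map_mul, map_pow, map_sum, hτ]
    refine (natDegree_add_le _ _).trans (max_le (by simp only [w]; omega) ?_)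
    refine natDegree_mul_le.trans ?_
    rw [natDegree_X_pow]
    have : (∑ i ∈ ε, (X : F[X]) ^ i).natDegree ≤ 4 * q := by
      refine natDegree_sum_le_of_forall_le _ _ fun i hi => ?_
      rw [natDegree_X_pow]
      have := Finset.mem_powerset.mp (hS hε) hi
      rw [Finset.mem_range] at this; omega
    simp only [w]; omega
  have hcard8 : (Finset.range (3 * q)).powerset.card = 8 ^ q := by
    rw [Finset.card_powerset, Finset.card_range, pow_mul]; norm_num
  let cl : Finset ℕ → Finset ℕ := fun ε => ε ∩ Finset.range (3 * q)
  have himg : (S.image cl).card ≤ 8 ^ q := by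
    rw [← hcard8]
    apply Finset.card_le_card
    intro v hv
    obtain ⟨ε, -, rfl⟩ := Finset.mem_image.mp hv
    exact Finset.mem_powerset.mpr Finset.inter_subset_right
  refine (Finset.card_le_mul_card_image (f := cl) S (B * d) ?_).trans (Nat.mul_le_mul_left _ himg)
  intro v hv
  have hex : ∀ t : R, ∃ y, (∃ y', h.evalEval t y' = 0) → h.evalEval t y = 0 := by
    intro t
    by_cases h' : ∃ y', h.evalEval t y' = 0
    · obtain ⟨y', hy'⟩ := h'; exact ⟨y', fun _ => hy'⟩
    · exact ⟨0, fun h'' => absurd h'' h'⟩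
  choose y hy using hex
  rw [← Finset.card_image_of_injective _ (auxT_inj ι τ x0 hτ c)]
  have hmem : ∀ t ∈ ({x ∈ S | cl x = v}).image (auxT τ x0 c), ∃ ε ∈ S, cl ε = v ∧ auxT τ x0 c ε = t := by
    intro t ht
    obtain ⟨ε, hε, rfl⟩ := Finset.mem_image.mp ht
    rw [Finset.mem_filter] at hε
    exact ⟨ε, hε.1, hε.2, rfl⟩
  have hdvdiff : ∀ (n : ℕ) (p : F[X]), (PowerSeries.X : PowerSeries F) ^ n ∣ (p : PowerSeries F) ↔
      X ^ n ∣ p := by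
    intro n p
    rw [PowerSeries.X_pow_dvd_iff, Polynomial.X_pow_dvd_iff]
    simp
  apply aux_class ι hι h hmon d hd' (by omega) c (c + 3 * q) (2 * (μ * d) + 1) (4 * q + w) μ B
    (by omega) (by omega) (by omega) hB (aux_num d μ c w q (by omega) (by omega)) _ y
  · intro t ht
    obtain ⟨ε, hε, -, rfl⟩ := hmem t ht
    exact hy _ (hbad ε hε)
  · intro t ht
    obtain ⟨ε, hε, -, rfl⟩ := hmem t ht
    exact hW _ hε
  · intro t ht
    obtain ⟨ε, hε, -, rfl⟩ := hmem t ht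
    exact hμ _ _ _ (by omega) (hW _ hε) (hy _ (hbad ε hε))
  · intro t ht
    obtain ⟨ε, hε, -, rfl⟩ := hmem t ht
    have h0 := hy _ (hbad ε hε)
    set t := auxT τ x0 c ε with ht'
    rw [hdvdiff]
    intro hdv
    apply hc
    have h1 := congrArg (evalEval t (y t)) hab
    rw [evalEval_add, evalEval_mul, evalEval_mul, h0, mul_zero, zero_add, evalEval_C] at h1
    have h2 : X ^ c ∣ ι (Δ.eval t) := by
      rw [← h1, map_mul]; exact Dvd.dvd.mul_left hdv _
    have h3 : X ^ c ∣ ι (Δ.eval t) - ι (Δ.eval x0) := by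
      rw [← map_sub]
      have : t - x0 ∣ Δ.eval t - Δ.eval x0 := sub_dvd_eval_sub _ _ _
      refine dvd_trans ?_ (map_dvd ι this)
      simp [ht', auxT, hτ]
    exact (dvd_sub_right h2).mp h3
  · intro t ht t' ht''
    obtain ⟨ε, hε, h1, rfl⟩ := hmem t ht
    obtain ⟨ε', hε', h1', rfl⟩ := hmem t' ht''
    rw [← coe_sub, hdvdiff]
    simp only [auxT, map_add, map_mul, map_pow, map_sum, hτ]
    rw [← Finset.sum_inter_add_sum_sdiff ε (Finset.range (3 * q)),
      ← Finset.sum_inter_add_sum_sdiff ε' (Finset.range (3 * q))]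
    have h2 : ε ∩ Finset.range (3 * q) = ε' ∩ Finset.range (3 * q) := h1.trans h1'.symm
    rw [h2]
    have h3 : ∀ s : Finset ℕ, (X : F[X]) ^ (3 * q) ∣ ∑ i ∈ s \ Finset.range (3 * q), X ^ i := by
      intro s
      refine Finset.dvd_sum fun i hi => pow_dvd_pow _ ?_
      simp at hi; omega
    have h4 := dvd_sub (h3 ε) (h3 ε')
    have h5 := mul_dvd_mul_left (X ^ c : F[X]) h4
    rw [pow_add]
    convert h5 using 1
    ring

lemma aux_factor {R : Type*} [CommRing R] [IsDomain R] [UniqueFactorizationMonoid R]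
    (h : R[X][X]) (hm : h.Monic) : ∃ L : Finset R[X][X], (∀ f ∈ L, f.Monic ∧ Irreducible f ∧ f ∣ h) ∧
      ∀ t y, h.evalEval t y = 0 → ∃ f ∈ L, f.evalEval t y = 0 := by
  classical
  obtain ⟨M, hM, hass⟩ := WfDvdMonoid.exists_factors h hm.ne_zero
  have hdvd : ∀ b ∈ M, b ∣ h := fun b hb => (Multiset.dvd_prod hb).trans hass.dvd
  have hu : ∀ b ∈ M, ∃ u : R[X]ˣ, (u : R[X]) * b.leadingCoeff = 1 := by
    intro b hb
    obtain ⟨g, hg⟩ := hdvd b hb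
    have : b.leadingCoeff * g.leadingCoeff = 1 := by rw [← leadingCoeff_mul, ← hg, hm]
    exact ⟨⟨g.leadingCoeff, b.leadingCoeff, by rw [mul_comm, this], this⟩, by
      rw [mul_comm]; exact this⟩
  let φ : R[X][X] → R[X][X] := fun b => C (Ring.inverse b.leadingCoeff) * b
  have hφ : ∀ b ∈ M, Associated b (φ b) ∧ (φ b).Monic := by
    intro b hb
    obtain ⟨u, hu⟩ := hu b hb
    have h1 : b.leadingCoeff = ((u⁻¹ : R[X]ˣ) : R[X]) := by
      exact (Units.inv_eq_of_mul_eq_one_right hu).symm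
    have h2 : Ring.inverse b.leadingCoeff = (u : R[X]) := by rw [h1, Ring.inverse_unit, inv_inv]
    constructor
    · refine ⟨Units.map (C : R[X] →+* R[X][X]).toMonoidHom u, ?_⟩
      simp only [φ, h2]
      rw [mul_comm]; rfl
    · rw [Monic, leadingCoeff_mul, leadingCoeff_C, h2, hu]
  refine ⟨(M.map φ).toFinset, ?_, ?_⟩
  · intro f hf
    rw [Multiset.mem_toFinset, Multiset.mem_map] at hf
    obtain ⟨b, hb, rfl⟩ := hf
    exact ⟨(hφ b hb).2, (hφ b hb).1.irreducible (hM b hb), (hφ b hb).1.symm.dvd.trans (hdvd b hb)⟩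
  · intro t y h0
    obtain ⟨u, hu⟩ := hass.symm
    have h1 : M.prod.evalEval t y = 0 := by rw [← hu, evalEval_mul, h0, zero_mul]
    have h2 : (M.map (evalEvalRingHom t y)).prod = 0 := by
      rw [← map_multiset_prod]; exact h1
    rw [Multiset.prod_eq_zero_iff, Multiset.mem_map] at h2
    obtain ⟨b, hb, hb0⟩ := h2
    refine ⟨φ b, ?_, ?_⟩
    · rw [Multiset.mem_toFinset]; exact Multiset.mem_map_of_mem _ hb
    · simp only [φ, evalEval_mul]
      rw [show b.evalEval t y = 0 from hb0, mul_zero]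

lemma aux_step {R F : Type*} [CommRing R] [IsDomain R] [UniqueFactorizationMonoid R] [Field F]
    (ι : R →+* F[X]) (hι : Function.Injective ι) (τ : R) (hτ : ι τ = X)
    (H : Finset R[X][X]) (Δ : R[X]) (hΔ : Δ ≠ 0)
    (hH : ∀ h ∈ H, h.Monic ∧ (∃ a b : R[X][X], a * h + b * derivative h = C Δ) ∧
      ∀ p : R[X], h.eval p ≠ 0) :
    ∃ z : ℤ[X], Δ.eval (z.eval₂ (Int.castRingHom R) τ) ≠ 0 ∧
      ∀ h ∈ H, ∀ y : R, h.evalEval (z.eval₂ (Int.castRingHom R) τ) y ≠ 0 := by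
  classical
  -- base point
  obtain ⟨j, hj⟩ : ∃ j : ℕ, Δ.eval (τ ^ j) ≠ 0 := by
    by_contra hcon
    push Not at hcon
    apply hΔ
    apply eq_zero_of_infinite_isRoot
    refine Set.Infinite.mono (s := Set.range fun j : ℕ => τ ^ j) ?_ ?_
    · rintro _ ⟨j, rfl⟩; exact hcon j
    · apply Set.infinite_range_of_injective
      intro i j hij
      have := congrArg ι hij
      simp only [map_pow, hτ] at this
      have := congrArg natDegree this
      simpa using this
  set x0 := τ ^ j with hx0
  obtain ⟨c, hc⟩ : ∃ c, ¬ X ^ c ∣ ι (Δ.eval x0) := by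
    refine ⟨(ι (Δ.eval x0)).natDegree + 1, fun hdv => ?_⟩
    have h1 : ι (Δ.eval x0) ≠ 0 := by rwa [Ne, map_eq_zero_iff _ hι]
    have := natDegree_le_of_dvd hdv h1
    simp at this
  have hx : ∀ h : R[X][X], ∃ L : Finset R[X][X], h ∈ H → (∀ f ∈ L, f.Monic ∧ Irreducible f ∧ f ∣ h) ∧
      ∀ t y, h.evalEval t y = 0 → ∃ f ∈ L, f.evalEval t y = 0 := by
    intro h
    by_cases hh : h ∈ H
    · obtain ⟨L, hL⟩ := aux_factor h (hH h hh).1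
      exact ⟨L, fun _ => hL⟩
    · exact ⟨∅, fun h' => absurd h' hh⟩
  choose L hL using hx
  have hb : ∀ f : R[X][X], ∃ Cq : ℕ × ℕ, f ∈ H.biUnion L →
      ∀ q, Cq.2 ≤ q → ∀ S ⊆ (Finset.range (4 * q)).powerset,
      (∀ ε ∈ S, ∃ y, f.evalEval (auxT τ x0 c ε) y = 0) → S.card ≤ Cq.1 * 8 ^ q := by
    intro f
    by_cases hf : f ∈ H.biUnion L
    · obtain ⟨h, hh, hf'⟩ := Finset.mem_biUnion.mp hf
      obtain ⟨hfm, hfi, g, hg⟩ := (hL h hh).1 f hf'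
      obtain ⟨hm, ⟨a, b, hab⟩, hroot⟩ := hH h hh
      obtain ⟨Cc, q0, hC⟩ := aux_bad ι hι τ hτ f hfm hfi (by
        by_contra hlt
        have : f.natDegree = 0 ∨ f.natDegree = 1 := by omega
        rcases this with h0 | h1
        · rw [hfm.natDegree_eq_zero] at h0
          exact hfi.not_isUnit (h0 ▸ isUnit_one)
        · have h2 := hfm.as_sum
          rw [h1] at h2
          apply hroot (-f.coeff 0)
          rw [hg, eval_mul, h2]
          simp) (a * g + b * derivative g) (b * g) Δ (by
            rw [← hab, hg, derivative_mul]; ring) x0 c hc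
      exact ⟨(Cc, q0), fun _ => hC⟩
    · exact ⟨0, fun h => absurd h hf⟩
  choose Cq hCq using hb
  let Ct := ∑ f ∈ H.biUnion L, (Cq f).1
  let q := Ct + ∑ f ∈ H.biUnion L, (Cq f).2
  have hq : ∀ f ∈ H.biUnion L, (Cq f).2 ≤ q := fun f hf =>
    (Finset.single_le_sum (f := fun f => (Cq f).2) (fun _ _ => Nat.zero_le _) hf).trans
      (Nat.le_add_left _ _)
  let S : R[X][X] → Finset (Finset ℕ) := fun f =>
    (Finset.range (4 * q)).powerset.filter fun ε => ∃ y, f.evalEval (auxT τ x0 c ε) y = 0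
  obtain ⟨ε, hε, hεS⟩ : ∃ ε ∈ (Finset.range (4 * q)).powerset, ε ∉ (H.biUnion L).biUnion S := by
    by_contra hcon
    push Not at hcon
    have h1 : (Finset.range (4 * q)).powerset.card ≤ Ct * 8 ^ q := by
      refine (Finset.card_le_card hcon).trans (Finset.card_biUnion_le.trans ?_)
      rw [Finset.sum_mul]
      refine Finset.sum_le_sum fun f hf => hCq f hf q (hq f hf) _ (Finset.filter_subset _ _) ?_
      intro ε hε
      exact (Finset.mem_filter.mp hε).2
    rw [Finset.card_powerset, Finset.card_range, pow_mul] at h1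
    have h2 : ((2 ^ 4) ^ q : ℕ) = 2 ^ q * 8 ^ q := by rw [← mul_pow]; norm_num
    rw [h2] at h1
    have h3 := Nat.le_of_mul_le_mul_right h1 (by positivity)
    have h4 : q < 2 ^ q := Nat.lt_two_pow_self
    have h5 : Ct ≤ q := Nat.le_add_right _ _
    omega
  refine ⟨X ^ j + X ^ c * ∑ i ∈ ε, X ^ i, ?_⟩
  have ht : (X ^ j + X ^ c * ∑ i ∈ ε, X ^ i : ℤ[X]).eval₂ (Int.castRingHom R) τ = auxT τ x0 c ε := by
    simp [auxT, hx0, eval₂_finsetSum]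
  rw [ht]
  constructor
  · intro h0
    apply hc
    have h1 : auxT τ x0 c ε - x0 ∣ Δ.eval (auxT τ x0 c ε) - Δ.eval x0 := sub_dvd_eval_sub _ _ _
    rw [h0, zero_sub, dvd_neg] at h1
    refine dvd_trans ?_ (map_dvd ι h1)
    simp [auxT, hτ]
  · intro h hh y h0
    obtain ⟨f, hf, hf0⟩ := (hL h hh).2 _ _ h0
    apply hεS
    rw [Finset.mem_biUnion]
    refine ⟨f, Finset.mem_biUnion.mpr ⟨h, hh, hf⟩, Finset.mem_filter.mpr ⟨hε, y, hf0⟩⟩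

lemma aux_iota (F : Type*) [Field F] (n : ℕ) :
    ∃ ι : MvPolynomial (Fin n) F[X] →+* (FractionRing (MvPolynomial (Fin n) F))[X],
      Function.Injective ι ∧ ι (MvPolynomial.C X) = X := by
  let e1 := MvPolynomial.optionEquivRight F (Fin n)
  let e2 := MvPolynomial.optionEquivLeft F (Fin n)
  refine ⟨(mapRingHom (algebraMap (MvPolynomial (Fin n) F)
    (FractionRing (MvPolynomial (Fin n) F)))).comp
      (e2.toRingEquiv.toRingHom.comp e1.symm.toRingEquiv.toRingHom), ?_, ?_⟩
  · intro x y hxy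
    apply e1.symm.injective
    apply e2.injective
    exact map_injective _ (IsFractionRing.injective (MvPolynomial (Fin n) F)
      (FractionRing (MvPolynomial (Fin n) F))) hxy
  · have h1 : e1.symm (MvPolynomial.C X) = MvPolynomial.X none := by
      rw [AlgEquiv.symm_apply_eq]
      simp [e1]
    have h2 : e2 (MvPolynomial.X none) = X := by simp [e2]
    simp [h1, h2]

theorem aux_HIT (F : Type*) [Field F] (n : ℕ) :
    ∀ (H : Finset (MvPolynomial (Fin n) F[X])[X]) (Δ : MvPolynomial (Fin n) F[X]), Δ ≠ 0 →
    (∀ h ∈ H, h.Monic ∧ (∃ a b, a * h + b * derivative h = C Δ) ∧ ∀ p, h.eval p ≠ 0) →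
    ∃ t : Fin n → ℤ[X],
      MvPolynomial.eval (fun i => (t i).map (Int.castRingHom F)) Δ ≠ 0 ∧
      ∀ h ∈ H, ∀ y : F[X],
        (h.map (MvPolynomial.eval (fun i => (t i).map (Int.castRingHom F)))).eval y ≠ 0 := by
  classical
  induction n with
  | zero =>
    intro H Δ hΔ hH
    refine ⟨fun _ => 0, ?_, ?_⟩
    · intro h0
      apply hΔ
      rw [MvPolynomial.eq_C_of_isEmpty Δ] at h0 ⊢
      rw [MvPolynomial.eval_C] at h0
      rw [h0, map_zero]
    · intro h hh y h0
      apply (hH h hh).2.2 (MvPolynomial.C y)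
      have h1 : MvPolynomial.eval (fun i => (0 : ℤ[X]).map (Int.castRingHom F))
          (h.eval (MvPolynomial.C y)) = 0 := by
        rw [← h0, eval_map]
        conv_rhs => rw [← MvPolynomial.eval_C (f := fun i : Fin 0 => (0 : ℤ[X]).map (Int.castRingHom F)) y]
        rw [eval₂_hom]
      rw [MvPolynomial.eq_C_of_isEmpty (h.eval (MvPolynomial.C y))] at h1 ⊢
      rw [MvPolynomial.eval_C] at h1
      rw [h1, map_zero]
  | succ n ih =>
    intro H Δ hΔ hH
    obtain ⟨ι, hι, hτ⟩ := aux_iota F n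
    let σ := MvPolynomial.finSuccEquiv F[X] n
    let σ' : MvPolynomial (Fin (n + 1)) F[X] →+* (MvPolynomial (Fin n) F[X])[X] := σ
    have hσ : ∀ p, σ' p = σ p := fun p => rfl
    obtain ⟨z, hz1, hz2⟩ := aux_step ι hι _ hτ (H.image (fun h => h.map σ')) (σ' Δ)
      (by rw [hσ]; simpa using hΔ) (by
        intro h' hh'
        obtain ⟨h, hh, rfl⟩ := Finset.mem_image.mp hh'
        obtain ⟨hm, ⟨a, b, hab⟩, hr⟩ := hH h hh
        refine ⟨hm.map _, ⟨a.map σ', b.map σ', ?_⟩, ?_⟩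
        · rw [derivative_map, ← Polynomial.map_mul, ← Polynomial.map_mul, ← Polynomial.map_add,
            hab, map_C]
        · intro p hp
          apply hr (σ.symm p)
          apply σ.injective
          rw [map_zero, ← hp, eval_map]
          have : p = σ' (σ.symm p) := by rw [hσ]; simp
          conv_rhs => rw [this]
          rw [eval₂_hom]; rfl)
    have hzz : z.eval₂ (Int.castRingHom (MvPolynomial (Fin n) F[X])) (MvPolynomial.C X) =
        MvPolynomial.C (z.map (Int.castRingHom F)) := by
      have h1 : z.map (Int.castRingHom F) = z.eval₂ (Int.castRingHom F[X]) X := by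
        rw [eval₂_eq_sum, Polynomial.map, eval₂_eq_sum]
        congr 1
      rw [h1, hom_eval₂]
      congr 1
    set t0 : F[X] := z.map (Int.castRingHom F) with ht0
    rw [hzz] at hz1 hz2
    let ev : MvPolynomial (Fin (n + 1)) F[X] →+* MvPolynomial (Fin n) F[X] :=
      (evalRingHom (MvPolynomial.C t0)).comp σ'
    obtain ⟨t, ht1, ht2⟩ := ih (H.image (fun h => h.map ev)) (ev Δ) hz1 (by
      intro h' hh'
      obtain ⟨h, hh, rfl⟩ := Finset.mem_image.mp hh'
      obtain ⟨hm, ⟨a, b, hab⟩, hr⟩ := hH h hh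
      refine ⟨hm.map _, ⟨a.map ev, b.map ev, ?_⟩, ?_⟩
      · rw [derivative_map, ← Polynomial.map_mul, ← Polynomial.map_mul, ← Polynomial.map_add,
            hab, map_C]
      · intro p hp
        apply hz2 _ (Finset.mem_image_of_mem _ hh) p
        rw [← hp, ← Polynomial.map_map, eval_map (evalRingHom _), eval₂_evalRingHom])
    have hev : ∀ p, MvPolynomial.eval
        (fun i => ((Fin.cons z t : Fin (n + 1) → ℤ[X]) i).map (Int.castRingHom F)) p =
        MvPolynomial.eval (fun i => (t i).map (Int.castRingHom F)) (ev p) := by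
      intro p
      have h1 : (fun i => ((Fin.cons z t : Fin (n + 1) → ℤ[X]) i).map (Int.castRingHom F)) =
          Fin.cons t0 (fun i => (t i).map (Int.castRingHom F)) := by
        ext i : 1
        refine Fin.cases ?_ (fun i => ?_) i
        · simp [ht0]
        · simp
      rw [h1, MvPolynomial.eval_eq_eval_mv_eval', eval_map]
      conv_lhs => rw [← MvPolynomial.eval_C (f := fun i : Fin n => (t i).map (Int.castRingHom F)) t0]
      rw [eval₂_hom]
      rfl
    refine ⟨Fin.cons z t, ?_, ?_⟩
    · rw [hev]; exact ht1
    · intro h hh y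
      have h1 : MvPolynomial.eval
        (fun i => ((Fin.cons z t : Fin (n + 1) → ℤ[X]) i).map (Int.castRingHom F)) =
        (MvPolynomial.eval (fun i => (t i).map (Int.castRingHom F))).comp ev := RingHom.ext hev
      rw [h1, ← Polynomial.map_map]
      exact ht2 _ (Finset.mem_image_of_mem _ hh) y

end PartI

section PartII
open Polynomial

lemma aux_decomp {k A K M N : Type*} [Field k] [CommRing A] [IsDomain A] [IsIntegrallyClosed A]
    [Field K] [Field M] [Field N] [Algebra A K] [IsFractionRing A K] [Algebra K M]
    [Algebra A M] [IsScalarTower A K M] [FiniteDimensional K M] [IsGalois K M]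
    [Algebra k N] (ev : A →+* k)
    (φ : integralClosure A M →+* N) (hφ : Function.Surjective φ)
    (hev : ∀ a, φ (algebraMap A _ a) = algebraMap k N (ev a)) :
    Normal k N ∧ ∀ τ : N ≃ₐ[k] N, ∃ γ : M ≃ₐ[K] M, ∀ b b' : integralClosure A M,
      (b' : M) = γ b → τ (φ b) = φ b' := by
  classical
  let Bh := integralClosure A M
  haveI : IsFractionRing Bh M := integralClosure.isFractionRing_of_finite_extension K M
  letI : MulSemiringAction (M ≃ₐ[K] M) Bh := IsIntegralClosure.MulSemiringAction A K M Bh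
  haveI hinv : Algebra.IsInvariant A Bh (M ≃ₐ[K] M) := Algebra.isInvariant_of_isGalois A K M Bh
  have hact : ∀ (γ : M ≃ₐ[K] M) (b : Bh), ((γ • b : Bh) : M) = γ b := fun γ b =>
    algebraMap_galRestrict_apply A γ b
  haveI : SMulCommClass (M ≃ₐ[K] M) A Bh := ⟨fun γ a b => by
    apply Subtype.ext
    rw [hact]
    have h1 : ((a • b : Bh) : M) = a • (b : M) := rfl
    have h2 : ((a • (γ • b) : Bh) : M) = a • ((γ • b : Bh) : M) := rfl
    rw [h1, h2, hact, Algebra.smul_def, Algebra.smul_def, map_mul,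
      IsScalarTower.algebraMap_apply A K M, γ.commutes]⟩
  haveI : Fintype (M ≃ₐ[K] M) := Fintype.ofFinite _
  constructor
  · haveI : Algebra.IsAlgebraic k N := by
      constructor
      intro x
      obtain ⟨b, rfl⟩ := hφ x
      obtain ⟨p, hp, hpb⟩ := b.2
      refine ⟨p.map ev, (hp.map ev).ne_zero, ?_⟩
      have h1 : p.aeval b = 0 := by
        apply Subtype.val_injective
        have : ((p.aeval b : Bh) : M) = p.aeval (b : M) := by
          exact (aeval_algHom_apply (integralClosure A M).val b p).symm
        rw [this]; exact hpb
      have h2 := congrArg φ h1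
      rw [map_zero, aeval_def, hom_eval₂] at h2
      rw [aeval_def, eval₂_map, ← h2]
      congr 1
      ext a; exact (hev a).symm
    constructor
    intro x
    obtain ⟨b, rfl⟩ := hφ x
    obtain ⟨p, hp, -, h_monic⟩ := lifts_and_natDegree_eq_and_monic
      (Algebra.IsInvariant.charpoly_mem_lifts A Bh (M ≃ₐ[K] M) b) (MulSemiringAction.monic_charpoly ..)
    have h_eval : p.eval₂ (algebraMap A Bh) b = 0 := by
      rw [← eval_map, hp, MulSemiringAction.eval_charpoly]
    have hcomm : (algebraMap k N).comp ev = φ.comp (algebraMap A Bh) := by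
      ext a; exact (hev a).symm
    have h1 : aeval (φ b) (p.map ev) = 0 := by
      rw [aeval_def, eval₂_map, hcomm, ← hom_eval₂, h_eval, map_zero]
    refine Splits.of_dvd ?_ ?_ (map_dvd (mapRingHom (algebraMap k N)) (minpoly.dvd k _ h1))
    · simp only [coe_mapRingHom]
      rw [Polynomial.map_map, hcomm, ← Polynomial.map_map]
      apply Splits.map
      rw [hp]
      exact MulSemiringAction.splits_charpoly _ b
    · exact ((h_monic.map ev).map _).ne_zero
  · intro τ
    let Q : Ideal Bh := RingHom.ker φ
    let P : Ideal A := RingHom.ker ev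
    haveI : Q.IsPrime := RingHom.ker_isPrime φ
    haveI : Q.LiesOver P := ⟨by
      ext a
      rw [Ideal.mem_comap, RingHom.mem_ker, RingHom.mem_ker, hev]
      simp⟩
    let e : Bh ⧸ Q ≃+* N := RingHom.quotientKerEquivOfSurjective hφ
    have he : ∀ b, e (Ideal.Quotient.mk Q b) = φ b := fun b => rfl
    let τ' : (Bh ⧸ Q) ≃ₐ[A ⧸ P] (Bh ⧸ Q) := AlgEquiv.ofRingEquiv (f := (e.trans τ.toRingEquiv).trans e.symm) (by
      intro x
      obtain ⟨a, rfl⟩ := Ideal.Quotient.mk_surjective x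
      have : algebraMap (A ⧸ P) (Bh ⧸ Q) (Ideal.Quotient.mk P a) = Ideal.Quotient.mk Q (algebraMap A Bh a) := rfl
      rw [this]
      simp only [RingEquiv.trans_apply]
      rw [RingEquiv.symm_apply_eq, he, hev]
      exact τ.commutes _)
    obtain ⟨g, hg⟩ := Ideal.Quotient.stabilizerHom_surjective (M ≃ₐ[K] M) P Q τ'
    refine ⟨g, fun b b' hbb => ?_⟩
    have h1 := congrArg (fun f => f (Ideal.Quotient.mk Q b)) hg
    simp only [Ideal.Quotient.stabilizerHom_apply] at h1
    have h2 : (g • b : Bh) = b' := Subtype.ext (by rw [hbb]; exact hact _ _)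
    rw [h2] at h1
    have h3 : τ' (Ideal.Quotient.mk Q b) = e.symm (τ (φ b)) := rfl
    rw [h3, eq_comm, RingEquiv.symm_apply_eq, he] at h1
    exact h1

/-- bundle of hypotheses on a good specialization -/
structure AuxSpec (κ k A K M N : Type*) [Field κ] [Field k] [CommRing A]
    [Field K] [Field M] [Field N] [Algebra κ k] [Algebra κ A] [Algebra κ M] [Algebra κ N]
    [Algebra A K] [Algebra K M] [Algebra A M] [Algebra k N]
    (ev : A →+* k) (φ : integralClosure A M →+* N) (FF : IntermediateField k N) : Prop where
  evκ : ∀ a : κ, ev (algebraMap κ A a) = algebraMap κ k a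
  surj : Function.Surjective φ
  evs : Function.Surjective ev
  hev : ∀ a, φ (algebraMap A _ a) = algebraMap k N (ev a)
  sep : Algebra.IsSeparable k N
  fin : FiniteDimensional k N
  alg : ∀ x : k, IsAlgebraic κ x → ∃ a : κ, algebraMap κ k a = x
  hFF : ∀ z : N, IsSeparable κ z → z ∈ FF
  hθ : ∀ U : Subgroup (M ≃ₐ[K] M), ∃ θ : integralClosure A M,
    (∀ γ ∈ U, γ (θ : M) = θ) ∧
    (∀ γ : M ≃ₐ[K] M, ∀ θ' : integralClosure A M, (θ' : M) = γ θ → φ θ' = φ θ → γ ∈ U) ∧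
    (φ θ ∈ FF → ∀ γ : M ≃ₐ[K] M,
      (∀ c : M, IsSeparable κ c → (∀ u ∈ U, u c = c) → γ c = c) → γ ∈ U)

lemma aux_gint {A K M : Type*} [CommRing A] [Field K] [Field M]
    [Algebra A K] [Algebra K M] [Algebra A M] [IsScalarTower A K M] (γ : M ≃ₐ[K] M) (b : integralClosure A M) : γ (b : M) ∈ integralClosure A M := by
  have := b.2
  rw [mem_integralClosure_iff] at this ⊢
  exact this.map (γ.toAlgHom.restrictScalars A)

section
set_option linter.unusedSectionVars false
variable {κ k A K M N : Type*} [Field κ] [Field k] [CommRing A]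
    [Field K] [Field M] [Field N] [Algebra κ k] [Algebra κ A] [Algebra κ M] [Algebra κ N]
    [Algebra A K] [Algebra K M] [Algebra A M] [Algebra k N]
    [IsDomain A] [IsIntegrallyClosed A] [IsFractionRing A K]
    [IsScalarTower A K M] [FiniteDimensional K M] [IsGalois K M]
    [IsScalarTower κ A M] [IsScalarTower κ k N]
    {ev : A →+* k} {φ : integralClosure A M →+* N} {FF : IntermediateField k N}

lemma aux_smallint {c : M} (hc : IsAlgebraic κ c) : c ∈ integralClosure A M := by
  rw [mem_integralClosure_iff]
  exact (isAlgebraic_iff_isIntegral.mp hc).tower_top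

lemma aux_galois (H : AuxSpec κ k A K M N ev φ FF) : IsGalois k N := by
  haveI := H.sep
  haveI := (aux_decomp (K := K) ev φ H.surj H.hev).1
  constructor

lemma aux_inj0 (H : AuxSpec κ k A K M N ev φ FF) (c : integralClosure A M)
    (hc : IsAlgebraic κ (c : M)) (h0 : φ c = 0) : c = 0 := by
  by_contra hne
  have hne' : (c : M) ≠ 0 := fun h => hne (Subtype.ext h)
  have h1 : (c : M)⁻¹ ∈ integralClosure A M := aux_smallint hc.inv
  have h2 : c * ⟨_, h1⟩ = 1 := Subtype.ext (mul_inv_cancel₀ hne')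
  have h3 := congrArg φ h2
  rw [map_mul, h0, zero_mul, map_one] at h3
  exact zero_ne_one h3

lemma aux_stab (H : AuxSpec κ k A K M N ev φ FF) (γ : M ≃ₐ[K] M) (b b' : integralClosure A M)
    (hb : (b' : M) = γ b) (h0 : φ b = 0) : φ b' = 0 := by
  haveI := aux_galois H
  haveI := H.fin
  have hdec := (aux_decomp (K := K) ev φ H.surj H.hev).2
  let D : Subgroup (M ≃ₐ[K] M) :=
    { carrier := {γ | ∀ b b' : integralClosure A M, (b' : M) = γ b → (φ b = 0 ↔ φ b' = 0)}
      one_mem' := by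
        intro b b' h
        have : b' = b := Subtype.ext h
        rw [this]
      mul_mem' := by
        intro x y hx hy b b' h
        rw [hy b ⟨_, aux_gint y b⟩ rfl]
        exact hx _ _ h
      inv_mem' := by
        intro x hx b b' h
        refine (hx b' b ?_).symm
        rw [h]
        exact (x.apply_symm_apply _).symm }
  suffices h : γ ∈ D from (h b b' hb).mp h0
  have hD : ∀ τ : N ≃ₐ[k] N, ∃ γ ∈ D, ∀ b b' : integralClosure A M,
      (b' : M) = γ b → τ (φ b) = φ b' := by
    intro τ
    obtain ⟨γ, hγ⟩ := hdec τ
    refine ⟨γ, ?_, hγ⟩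
    intro b b' h
    rw [← hγ b b' h]
    simp
  have hfix : ∀ c : integralClosure A M, (∀ u ∈ D, u (c : M) = c) →
      ∃ x : k, algebraMap k N x = φ c := by
    intro c hc
    have : φ c ∈ (⊥ : IntermediateField k N) := by
      rw [IsGalois.mem_bot_iff_fixed]
      intro τ
      obtain ⟨γ, hγ, h⟩ := hD τ
      exact h c c (hc γ hγ).symm
    exact IntermediateField.mem_bot.mp this
  obtain ⟨θ, h1, -, h3⟩ := H.hθ D
  refine h3 ?_ γ ?_
  · obtain ⟨x, hx⟩ := hfix θ h1
    rw [← hx]; exact FF.algebraMap_mem x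
  · intro c hc hu
    have hca : IsAlgebraic κ c := hc.isIntegral.isAlgebraic
    let c' : integralClosure A M := ⟨c, aux_smallint hca⟩
    obtain ⟨x, hx⟩ := hfix c' hu
    have hxa : IsAlgebraic κ x := by
      obtain ⟨p, hp, hpc⟩ := hca
      refine ⟨p, hp, ?_⟩
      apply (algebraMap k N).injective
      rw [map_zero, ← aeval_algebraMap_apply, hx]
      have h2 : aeval c' (p.map (algebraMap κ A)) = 0 := by
        apply Subtype.val_injective
        have : ((aeval c' (p.map (algebraMap κ A)) : integralClosure A M) : M)
            = aeval (c' : M) (p.map (algebraMap κ A)) :=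
          (aeval_algHom_apply (integralClosure A M).val c' _).symm
        rw [this, aeval_map_algebraMap]; exact hpc
      have h4 := congrArg φ h2
      rw [map_zero, aeval_def, hom_eval₂, eval₂_map] at h4
      rw [aeval_def, ← h4]
      congr 1
      ext a
      simp only [RingHom.comp_apply]
      rw [H.hev, H.evκ, ← IsScalarTower.algebraMap_apply]
    obtain ⟨a, rfl⟩ := H.alg x hxa
    have h5 : c' - algebraMap A _ (algebraMap κ A a) = 0 := by
      apply aux_inj0 H
      · refine hca.sub ?_
        have : ((algebraMap A (integralClosure A M) (algebraMap κ A a) : integralClosure A M) : M)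
          = algebraMap κ M a := by
          rw [IsScalarTower.algebraMap_apply κ A M]; rfl
        rw [this]
        exact isAlgebraic_algebraMap a
      · rw [map_sub, ← hx, H.hev, H.evκ, sub_self]
    have h6 : c = algebraMap K M (algebraMap A K (algebraMap κ A a)) := by
      have := congrArg Subtype.val (sub_eq_zero.mp h5)
      rw [← IsScalarTower.algebraMap_apply A K M]
      exact this
    rw [h6, γ.commutes]
end

lemma aux_powsep {κ N : Type*} [Field κ] [Field N] [Algebra κ N] (q : ℕ) [ExpChar κ q] (z : N)
    (hz : IsAlgebraic κ z) : ∃ m, IsSeparable κ (z ^ q ^ m) := by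
  obtain ⟨g, hg, m, hm⟩ := (minpoly.irreducible hz.isIntegral).hasSeparableContraction q
  refine ⟨m, hg.of_dvd (minpoly.dvd κ _ ?_)⟩
  have := minpoly.aeval κ z
  rw [← hm, expand_aeval] at this
  exact this

lemma aux_barhom {k A K E N : Type*} [Field k] [CommRing A]
    [Field K] [Field E] [Field N] [Algebra A K] [Algebra K E] [Algebra A E] [IsScalarTower A K E]
    [Algebra k N] [Algebra.IsAlgebraic k N]
    (ev : A →+* k) (hevs : Function.Surjective ev) (φ : integralClosure A E →+* N)
    (hsurj : Function.Surjective φ) (hev : ∀ a, φ (algebraMap A _ a) = algebraMap k N (ev a))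
    (hker : ∀ (σ : E ≃ₐ[K] E) (b b' : integralClosure A E), (b' : E) = σ b → φ b = 0 → φ b' = 0) :
    ∃ Ψ : (E ≃ₐ[K] E) →* (N ≃ₐ[k] N), ∀ σ (b b' : integralClosure A E), (b' : E) = σ b →
      Ψ σ (φ b) = φ b' := by
  have h1 : ∀ σ : E ≃ₐ[K] E, ∃ τ : N ≃ₐ[k] N, ∀ (b b' : integralClosure A E), (b' : E) = σ b →
      τ (φ b) = φ b' := by
    intro σ
    let s : integralClosure A E →+* integralClosure A E :=
      { toFun := fun b => ⟨σ b, aux_gint σ b⟩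
        map_one' := Subtype.ext (map_one σ)
        map_zero' := Subtype.ext (map_zero σ)
        map_add' := fun x y => Subtype.ext (map_add σ _ _)
        map_mul' := fun x y => Subtype.ext (map_mul σ _ _) }
    have hk : RingHom.ker φ ≤ RingHom.ker (φ.comp s) := by
      intro b hb
      rw [RingHom.mem_ker] at hb ⊢
      exact hker σ b _ rfl hb
    let f : N →+* N := RingHom.liftOfSurjective φ hsurj ⟨φ.comp s, hk⟩
    have hf : ∀ b, f (φ b) = φ (s b) := fun b =>
      RingHom.liftOfSurjective_comp_apply φ hsurj ⟨φ.comp s, hk⟩ b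
    let f' : N →ₐ[k] N := { f with
      commutes' := by
        intro x
        obtain ⟨a, rfl⟩ := hevs x
        change f _ = _
        rw [← hev, hf]
        congr 1
        apply Subtype.ext
        change σ (algebraMap A E a) = algebraMap A E a
        rw [IsScalarTower.algebraMap_apply A K E, σ.commutes] }
    refine ⟨AlgEquiv.ofBijective f' (Algebra.IsAlgebraic.algHom_bijective f'), ?_⟩
    intro b b' h
    have : s b = b' := Subtype.ext h.symm
    rw [← this]
    exact hf b
  choose τ hτ using h1
  refine ⟨⟨⟨τ, ?_⟩, ?_⟩, hτ⟩
  · ext x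
    obtain ⟨b, rfl⟩ := hsurj x
    exact hτ 1 b b rfl
  · intro x y
    ext z
    obtain ⟨b, rfl⟩ := hsurj z
    change τ (x * y) (φ b) = τ x (τ y (φ b))
    rw [hτ y b ⟨_, aux_gint y b⟩ rfl, hτ x ⟨_, aux_gint y b⟩ ⟨_, aux_gint x _⟩ rfl]
    exact hτ (x * y) _ _ rfl

section
set_option linter.unusedSectionVars false
variable {κ k A K M N : Type*} [Field κ] [Field k] [CommRing A]
    [Field K] [Field M] [Field N] [Algebra κ k] [Algebra κ A] [Algebra κ M] [Algebra κ N]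
    [Algebra A K] [Algebra K M] [Algebra A M] [Algebra k N]
    [IsDomain A] [IsIntegrallyClosed A] [IsFractionRing A K]
    [IsScalarTower A K M] [FiniteDimensional K M] [IsGalois K M]
    [IsScalarTower κ A M] [IsScalarTower κ k N]
    {ev : A →+* k} {φ : integralClosure A M →+* N} {FF : IntermediateField k N}
    {E Et : Type*} [Field E] [Field Et] [Algebra K E] [Algebra E M] [IsScalarTower K E M]
    [Algebra A E] [IsScalarTower A K E] [IsScalarTower A E M] [FiniteDimensional K E]
    [Algebra k Et] [Algebra Et N] [IsScalarTower k Et N]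
    [Algebra κ Et] [IsScalarTower κ Et N] [Algebra κ E] [IsScalarTower κ E M]

lemma aux_iint (b : integralClosure A E) : algebraMap E M (b : E) ∈ integralClosure A M := by
  have := b.2
  rw [mem_integralClosure_iff] at this ⊢
  exact this.algebraMap

lemma aux_eint {e : E} (h : algebraMap E M e ∈ integralClosure A M) : e ∈ integralClosure A E := by
  rw [mem_integralClosure_iff] at h ⊢
  exact (isIntegral_algebraMap_iff (algebraMap E M).injective).mp h

lemma aux_fixE (x : M) (hx : ∀ γ : M ≃ₐ[K] M, (∀ e : E, γ (algebraMap E M e) = algebraMap E M e) →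
    γ x = x) : ∃ e : E, algebraMap E M e = x := by
  haveI := IsGalois.tower_top_of_isGalois K E M
  haveI : FiniteDimensional E M := FiniteDimensional.right K E M
  refine (IsGalois.mem_range_algebraMap_iff_fixed (F := E) x).mpr ?_
  intro f
  exact hx (f.restrictScalars K) (fun e => f.commutes e)

theorem aux_iso (H : AuxSpec κ k A K M N ev φ FF) (π : integralClosure A E →+* Et)
    (hπ : Function.Surjective π)
    (hπφ : ∀ (b : integralClosure A E) (b' : integralClosure A M), (b' : M) = algebraMap E M b →
      φ b' = algebraMap Et N (π b)) :
    ∃ Ψ : (E ≃ₐ[K] E) ≃* (Et ≃ₐ[k] Et), ∀ σ (b b' : integralClosure A E), (b' : E) = σ b →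
      Ψ σ (π b) = π b' := by
  haveI := aux_galois H
  haveI := H.fin
  haveI : FiniteDimensional k Et := FiniteDimensional.left k Et N
  have hdec := (aux_decomp (K := K) ev φ H.surj H.hev).2
  have hinj := (algebraMap Et N).injective
  let HE : Subgroup (M ≃ₐ[K] M) :=
    { carrier := {γ | ∀ e : E, γ (algebraMap E M e) = algebraMap E M e}
      one_mem' := fun e => rfl
      mul_mem' := by
        intro x y hx hy e
        change x (y _) = _
        rw [hy, hx]
      inv_mem' := by
        intro x hx e
        change x.symm _ = _
        rw [AlgEquiv.symm_apply_eq, hx] }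
  obtain ⟨θ, h1, h2, -⟩ := H.hθ HE
  obtain ⟨e, he⟩ := aux_fixE (E := E) (K := K) (θ : M) (fun γ hγ => h1 γ hγ)
  have heB : e ∈ integralClosure A E := aux_eint (by rw [he]; exact θ.2)
  obtain ⟨Ψ, hΨ⟩ := aux_barhom (K := K) ev H.evs π hπ
    (by
      intro a
      apply hinj
      rw [← hπφ _ (algebraMap A _ a), H.hev, ← IsScalarTower.algebraMap_apply]
      exact IsScalarTower.algebraMap_apply A E M a)
    (by
      intro σ b b' hb h0
      apply hinj
      rw [map_zero, ← hπφ b' ⟨_, aux_iint b'⟩ rfl]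
      refine aux_stab H (σ.liftNormal M) ⟨_, aux_iint b⟩ _ ?_ ?_
      · change algebraMap E M b' = _
        rw [hb]
        exact (AlgEquiv.liftNormal_commutes σ M _).symm
      · rw [hπφ b _ rfl, h0, map_zero])
  have hΨinj : Function.Injective Ψ := by
    rw [injective_iff_map_eq_one]
    intro σ hσ
    have h3 : σ.liftNormal M ∈ HE := by
      refine h2 _ ⟨algebraMap E M (σ e), aux_iint ⟨_, aux_gint σ ⟨e, heB⟩⟩⟩ ?_ ?_
      · rw [← he]; exact (AlgEquiv.liftNormal_commutes σ M _).symm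
      · rw [hπφ ⟨_, aux_gint σ ⟨e, heB⟩⟩ _ rfl, hπφ ⟨e, heB⟩ θ he.symm,
          ← hΨ σ ⟨e, heB⟩ _ rfl, hσ]
        rfl
    ext x
    apply (algebraMap E M).injective
    rw [← AlgEquiv.liftNormal_commutes]
    exact h3 x
  have hΨsurj : Function.Surjective Ψ := by
    intro τ
    obtain ⟨γ, hγ⟩ := hdec (τ.liftNormal N)
    have hτ : ∀ x, (τ.liftNormal N) (algebraMap Et N x) = algebraMap Et N (τ x) :=
      AlgEquiv.liftNormal_commutes τ N
    have hnorm : ∀ h ∈ HE, γ⁻¹ * h * γ ∈ HE := by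
      intro h hh
      obtain ⟨b, hb⟩ := hπ (τ (π ⟨e, heB⟩))
      let x : integralClosure A M := ⟨_, aux_gint γ θ⟩
      have hx : φ x = algebraMap Et N (π b) := by
        rw [← hγ θ x rfl, hπφ ⟨e, heB⟩ θ he.symm, hτ, hb]
      let y : integralClosure A M := ⟨_, aux_iint (M := M) b⟩
      have hy : φ y = algebraMap Et N (π b) := hπφ b y rfl
      have h0 : φ (x - y) = 0 := by rw [map_sub, hx, hy, sub_self]
      let hx' : integralClosure A M := ⟨_, aux_gint h x⟩
      have h3 : φ (hx' - y) = 0 := by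
        refine aux_stab H h (x - y) (hx' - y) ?_ h0
        change h (x : M) - y = h (x - y : M)
        rw [map_sub]
        congr 1
        exact (hh b).symm
      have h4 : φ (hx' - x) = 0 := by
        rw [map_sub, hx, ← hy, ← map_sub, h3]
      refine h2 _ ⟨_, aux_gint γ⁻¹ hx'⟩ rfl ?_
      rw [← sub_eq_zero, ← map_sub]
      refine aux_stab H γ⁻¹ (hx' - x) _ ?_ h4
      change γ⁻¹ (hx' : M) - θ = γ⁻¹ (hx' - γ θ : M)
      rw [map_sub]
      congr 1
      exact (γ.symm_apply_apply _).symm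
    have hE : ∀ x : E, ∃ y : E, algebraMap E M y = γ (algebraMap E M x) := by
      intro x
      apply aux_fixE (K := K)
      intro h hh
      have := hnorm h hh x
      have h5 := congrArg γ this
      refine Eq.trans ?_ h5
      change _ = (γ * (γ⁻¹ * h * γ)) _
      rw [mul_assoc γ⁻¹, mul_inv_cancel_left]
      rfl
    choose s hs using hE
    have hMi := (algebraMap E M).injective
    let f : E →ₐ[K] E :=
      { toFun := s
        map_one' := hMi (by rw [hs]; simp)
        map_zero' := hMi (by rw [hs]; simp)
        map_add' := fun x y => hMi (by rw [hs, map_add, map_add, map_add, hs, hs])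
        map_mul' := fun x y => hMi (by rw [hs, map_mul, map_mul, map_mul, hs, hs])
        commutes' := fun x => hMi (by
          rw [hs, ← IsScalarTower.algebraMap_apply, γ.commutes]) }
    let σ : E ≃ₐ[K] E := AlgEquiv.ofBijective f (Algebra.IsAlgebraic.algHom_bijective f)
    have hσ : ∀ x, algebraMap E M (σ x) = γ (algebraMap E M x) := hs
    refine ⟨σ, ?_⟩
    ext x
    obtain ⟨b, rfl⟩ := hπ x
    apply hinj
    rw [hΨ σ b ⟨_, aux_gint σ b⟩ rfl, ← hτ, ← hπφ b ⟨_, aux_iint b⟩ rfl,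
      ← hπφ _ ⟨_, aux_iint ⟨_, aux_gint σ b⟩⟩ rfl]
    exact (hγ _ _ (hσ _)).symm
  exact ⟨MulEquiv.ofBijective Ψ ⟨hΨinj, hΨsurj⟩, hΨ⟩

theorem aux_reg (H : AuxSpec κ k A K M N ev φ FF) (π : integralClosure A E →+* Et)
    (hπφ : ∀ (b : integralClosure A E) (b' : integralClosure A M), (b' : M) = algebraMap E M b →
      φ b' = algebraMap Et N (π b)) (z : Et) (hz : IsAlgebraic κ z) (L0 : IntermediateField k Et)
    (hL0 : ∀ c : integralClosure A E, IsAlgebraic κ (c : E) → π c ∈ L0) (hπ : Function.Surjective π) :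
    z ∈ L0 := by
  haveI := aux_galois H
  haveI := H.fin
  have hinj := (algebraMap Et N).injective
  have hdec := (aux_decomp (K := K) ev φ H.surj H.hev).2
  obtain ⟨Ψ, hΨ⟩ := aux_barhom (K := K) ev H.evs φ H.surj H.hev (aux_stab H)
  have hΨs : ∀ τ, ∃ γ, Ψ γ = τ := by
    intro τ
    obtain ⟨γ, hγ⟩ := hdec τ
    refine ⟨γ, ?_⟩
    ext x
    obtain ⟨b, rfl⟩ := H.surj x
    rw [hΨ γ b ⟨_, aux_gint γ b⟩ rfl, hγ b ⟨_, aux_gint γ b⟩ rfl]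
  let z' : N := algebraMap Et N z
  let U : Subgroup (M ≃ₐ[K] M) := (IntermediateField.fixingSubgroup (IntermediateField.adjoin k {z'})).comap Ψ
  have hU : ∀ γ, γ ∈ U ↔ Ψ γ z' = z' := by
    intro γ
    rw [Subgroup.mem_comap, IntermediateField.mem_fixingSubgroup_iff]
    constructor
    · intro h; exact h z' (IntermediateField.mem_adjoin_simple_self k z')
    · intro h x hx
      have : IntermediateField.adjoin k {z'} ≤
          IntermediateField.fixedField (Subgroup.zpowers (Ψ γ)) := by
        rw [IntermediateField.adjoin_simple_le_iff, IntermediateField.mem_fixedField_iff]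
        intro f hf
        have h6 : Subgroup.zpowers (Ψ γ) ≤ MulAction.stabilizer (N ≃ₐ[k] N) z' := by
          rw [Subgroup.zpowers_le]; exact h
        exact h6 hf
      exact (IntermediateField.mem_fixedField_iff _ _).mp (this hx) _ (Subgroup.mem_zpowers _)
  obtain ⟨θ, h1, -, h3⟩ := H.hθ U
  have hz' : IsAlgebraic κ z' := hz.algebraMap
  have hθ : φ θ ∈ FF := by
    have h4 : φ θ ∈ IntermediateField.adjoin k {z'} := by
      rw [← IsGalois.fixedField_fixingSubgroup (IntermediateField.adjoin k {z'}),
        IntermediateField.mem_fixedField_iff]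
      intro τ hτ
      obtain ⟨γ, rfl⟩ := hΨs τ
      exact hΨ γ θ θ (h1 γ hτ).symm
    obtain ⟨q, hq⟩ := ExpChar.exists κ
    obtain ⟨m, hm⟩ := aux_powsep q z' hz'
    haveI : ExpChar k q := expChar_of_injective_algebraMap (algebraMap κ k).injective q
    rw [IntermediateField.adjoin_simple_eq_adjoin_pow_expChar_pow_of_isSeparable' k N z' q m] at h4
    refine (IntermediateField.adjoin_simple_le_iff.mpr ?_) h4
    exact H.hFF _ hm
  have key := h3 hθ
  have hmem : z' ∈ L0.map (IsScalarTower.toAlgHom k Et N) := by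
    rw [← IsGalois.fixedField_fixingSubgroup (L0.map (IsScalarTower.toAlgHom k Et N)),
        IntermediateField.mem_fixedField_iff]
    intro τ hτ
    rw [IntermediateField.mem_fixingSubgroup_iff] at hτ
    obtain ⟨γ, rfl⟩ := hΨs τ
    rw [← hU]
    apply key
    intro c hc hcU
    obtain ⟨e, rfl⟩ := aux_fixE (E := E) (K := K) c (by
      intro γ hγ
      apply hcU
      rw [hU]
      obtain ⟨b, hb⟩ := hπ z
      change Ψ γ (algebraMap Et N z) = algebraMap Et N z
      rw [← hb, ← hπφ b ⟨_, aux_iint b⟩ rfl]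
      exact hΨ γ _ _ (hγ _).symm)
    have hca : IsAlgebraic κ (algebraMap E M e) := hc.isIntegral.isAlgebraic
    have hea : IsAlgebraic κ e := (isAlgebraic_algebraMap_iff (algebraMap E M).injective).mp hca
    let c' : integralClosure A M := ⟨_, aux_smallint hca⟩
    let e' : integralClosure A E := ⟨e, aux_eint c'.2⟩
    have h5 := hL0 e' hea
    let c2 : integralClosure A M := ⟨_, aux_gint γ c'⟩
    have h6 : φ c2 = φ c' := by
      rw [← hΨ γ c' c2 rfl, hπφ e' c' rfl]
      exact hτ _ ⟨_, h5, rfl⟩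
    have h7 : c2 - c' = 0 := by
      apply aux_inj0 H
      · change IsAlgebraic κ (γ (algebraMap E M e) - algebraMap E M e)
        refine IsAlgebraic.sub ?_ hca
        obtain ⟨p, hp, hpe⟩ := hca
        refine ⟨p, hp, ?_⟩
        let γ' : M →ₐ[A] M := γ.toAlgHom.restrictScalars A
        have h8 := congrArg γ' hpe
        rw [map_zero, ← aeval_map_algebraMap A, ← aeval_algHom_apply] at h8
        rw [← aeval_map_algebraMap A]
        exact h8
      · rw [map_sub, h6, sub_self]
    exact congrArg Subtype.val (sub_eq_zero.mp h7)
  obtain ⟨y, hy, hyz⟩ := hmem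
  have : y = z := hinj hyz
  exact this ▸ hy
end

end PartII
section PartIII
open Polynomial

lemma aux_bez {A K : Type*} [CommRing A] [IsDomain A] [Field K] [Algebra A K] [IsFractionRing A K]
    (f : A[X]) (hs : (f.map (algebraMap A K)).Separable) :
    ∃ Δ : A, Δ ≠ 0 ∧ ∃ a b, a * f + b * derivative f = C Δ := by
  obtain ⟨a, b, hab⟩ := hs
  obtain ⟨u, hu, hau⟩ := IsLocalization.integerNormalization_spec (nonZeroDivisors A) a
  obtain ⟨v, hv, hbv⟩ := IsLocalization.integerNormalization_spec (nonZeroDivisors A) b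
  refine ⟨u * v, mul_ne_zero (nonZeroDivisors.ne_zero hu) (nonZeroDivisors.ne_zero hv),
    C v * IsLocalization.integerNormalization (nonZeroDivisors A) a,
    C u * IsLocalization.integerNormalization (nonZeroDivisors A) b, ?_⟩
  apply Polynomial.map_injective (algebraMap A K) (IsFractionRing.injective A K)
  simp only [Polynomial.map_add, Polynomial.map_mul, map_C, hau, hbv, ← derivative_map]
  rw [Algebra.smul_def, Algebra.smul_def]
  have h1 : ∀ x : A, algebraMap A K[X] x = C (algebraMap A K x) := fun x => rfl
  rw [h1, h1, map_mul, C_mul]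
  rw [show C (algebraMap A K u) * C (algebraMap A K v)
    = C (algebraMap A K u) * C (algebraMap A K v) * (1 : K[X]) by rw [mul_one], ← hab]
  ring

lemma aux_theta {A K M : Type*} [CommRing A] [IsDomain A] [Field K] [Algebra A K]
    [IsFractionRing A K] [Field M] [Algebra K M] [Algebra A M] [IsScalarTower A K M]
    [FiniteDimensional K M] [IsGalois K M] (U : Subgroup (M ≃ₐ[K] M)) :
    ∃ θ : M, IsIntegral A θ ∧ (∀ γ, γ θ = θ ↔ γ ∈ U) := by
  obtain ⟨x, hx⟩ := Field.exists_primitive_element K (IntermediateField.fixedField U)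
  haveI : Algebra.IsAlgebraic A M := by
    haveI := IsLocalization.isAlgebraic (R := A) K (nonZeroDivisors A)
    exact Algebra.IsAlgebraic.trans A K M
  obtain ⟨a, ha0, ha⟩ := (Algebra.IsAlgebraic.isAlgebraic (R := A) (x : M)).exists_integral_multiple
  have haK : algebraMap A K a ≠ 0 := fun h => ha0 ((IsFractionRing.injective A K) (by rw [h, map_zero]))
  have hsm : a • (x : M) = algebraMap A K a • (x : M) := (algebraMap_smul K a (x : M)).symm
  refine ⟨a • (x : M), ha, fun γ => ?_⟩
  rw [hsm, map_smul, (smul_right_injective M haK).eq_iff]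
  constructor
  · intro h
    rw [← IntermediateField.fixingSubgroup_fixedField U, IntermediateField.mem_fixingSubgroup_iff]
    intro y hy
    have h1 : IntermediateField.adjoin K {(x : M)} = IntermediateField.fixedField U := by
      have := congrArg (IntermediateField.map (IntermediateField.fixedField U).val) hx
      rw [IntermediateField.adjoin_map, Set.image_singleton] at this
      rw [IntermediateField.coe_val] at this
      rw [this, ← AlgHom.fieldRange_eq_map, IntermediateField.fieldRange_val]
    rw [← h1] at hy
    have : IntermediateField.adjoin K {(x : M)} ≤
        IntermediateField.fixedField (Subgroup.zpowers γ) := by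
      rw [IntermediateField.adjoin_simple_le_iff, IntermediateField.mem_fixedField_iff]
      intro f hf
      have h6 : Subgroup.zpowers γ ≤ MulAction.stabilizer (M ≃ₐ[K] M) (x : M) := by
        rw [Subgroup.zpowers_le]; exact h
      exact h6 hf
    exact (IntermediateField.mem_fixedField_iff _ _).mp (this hy) _ (Subgroup.mem_zpowers _)
  · intro h
    exact (IntermediateField.mem_fixedField_iff _ _).mp x.2 _ h

lemma aux_star {A0 B N : Type*} [CommRing A0] [CommRing B] [IsDomain B] [Field N]
    (ι : A0 →+* B) (φ : B →+* N) (f a b : A0[X]) (Δ : A0) (hab : a * f + b * derivative f = C Δ)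
    (hΔ : φ (ι Δ) ≠ 0) (θ θ' : B) (h : f.eval₂ ι θ = 0) (h' : f.eval₂ ι θ' = 0)
    (hφ : φ θ' = φ θ) : θ' = θ := by
  by_contra hne
  obtain ⟨e, he⟩ := binomExpansion (f.map ι) θ (θ' - θ)
  rw [add_sub_cancel, eval_map, eval_map, h, h', zero_add, sq, ← mul_assoc, ← add_mul] at he
  have h1 := (mul_eq_zero.mp he.symm).resolve_right (sub_ne_zero.mpr hne)
  have h2 := congrArg φ h1
  rw [map_add, map_mul, map_sub, hφ, sub_self, mul_zero, add_zero, map_zero] at h2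
  have h3 := congrArg (eval₂ ι θ) hab
  rw [eval₂_add, eval₂_mul, eval₂_mul, h, mul_zero, zero_add, eval₂_C] at h3
  rw [derivative_map, eval_map] at h2
  apply hΔ
  rw [← h3, map_mul, h2, mul_zero]

universe uN

lemma aux_fs {A0 A k K M : Type*} [CommRing A0] [IsDomain A0] [IsIntegrallyClosed A0]
    [CommRing A] [IsDomain A] [IsIntegrallyClosed A]
    [Field k] [Field K] [Field M] [Algebra A0 K] [IsFractionRing A0 K]
    [Algebra A K] [IsFractionRing A K] [Algebra K M] [Algebra A M] [Algebra A0 M] [Algebra A0 A]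
    [IsScalarTower A K M] [IsScalarTower A0 K M] [IsScalarTower A0 A K]
    [FiniteDimensional K M] [IsGalois K M] :
    ∃ Δ : A0, Δ ≠ 0 ∧ ∀ (N : Type uN) (_ : Field N) (_ : Algebra k N) (ev : A →+* k) (φ : integralClosure A M →+* N),
      Function.Surjective φ → (∀ a, φ (algebraMap A _ a) = algebraMap k N (ev a)) →
      ev (algebraMap A0 A Δ) ≠ 0 → FiniteDimensional k N ∧ Algebra.IsSeparable k N := by
  haveI : IsScalarTower A0 A M := IsScalarTower.of_algebraMap_eq (fun x => by
    rw [IsScalarTower.algebraMap_apply A0 K M, IsScalarTower.algebraMap_apply A0 A K,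
      ← IsScalarTower.algebraMap_apply A K M])
  obtain ⟨η, hη, hfix⟩ := aux_theta (A := A0) (K := K) (M := M) ⊥
  have htop : IntermediateField.adjoin K {η} = ⊤ := by
    rw [← IsGalois.fixedField_fixingSubgroup (IntermediateField.adjoin K {η})]
    have : (IntermediateField.adjoin K {η}).fixingSubgroup = ⊥ := by
      rw [eq_bot_iff]
      intro γ hγ
      rw [IntermediateField.mem_fixingSubgroup_iff] at hγ
      exact (hfix γ).mp (hγ η (IntermediateField.mem_adjoin_simple_self K η))
    rw [this, IntermediateField.fixedField_bot]
  have hηK : IsIntegral K η := Algebra.IsIntegral.isIntegral η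
  let pb : PowerBasis K M := PowerBasis.ofAdjoinEqTop hηK (by
    rw [← IntermediateField.adjoin_simple_toSubalgebra_of_isAlgebraic hηK.isAlgebraic, htop]; rfl)
  have hgen : pb.gen = η := PowerBasis.ofAdjoinEqTop_gen _ _
  have hd0 : IsIntegral A0 (Algebra.discr K pb.basis) := by
    apply Algebra.discr_isIntegral
    intro i
    rw [pb.basis_eq_pow, hgen]
    exact hη.pow _
  obtain ⟨δ, hδ⟩ := IsIntegrallyClosed.algebraMap_eq_of_integral hd0
  have hδ0 : δ ≠ 0 := by
    rintro rfl
    rw [map_zero] at hδ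
    exact Algebra.discr_not_zero_of_basis K pb.basis hδ.symm
  have hsepη : (minpoly K η).Separable := Algebra.IsSeparable.isSeparable K η
  rw [minpoly.isIntegrallyClosed_eq_field_fractions' K hη] at hsepη
  obtain ⟨Δ, hΔ0, a, b, hab⟩ := aux_bez (K := K) _ hsepη
  refine ⟨δ * Δ, mul_ne_zero hδ0 hΔ0, ?_⟩
  intro N _ _ ev φ hφ hev hne
  rw [map_mul, map_mul] at hne
  have hηA : IsIntegral A η := hη.tower_top
  let η' : integralClosure A M := ⟨η, hηA⟩
  let f := (minpoly A0 η).map (ev.comp (algebraMap A0 A))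
  have hroot : aeval (φ η') f = 0 := by
    have h1 : aeval η' ((minpoly A0 η).map (algebraMap A0 A)) = 0 := by
      apply Subtype.val_injective
      have : ((aeval η' ((minpoly A0 η).map (algebraMap A0 A)) : integralClosure A M) : M)
          = aeval (η' : M) ((minpoly A0 η).map (algebraMap A0 A)) :=
        (aeval_algHom_apply (integralClosure A M).val η' _).symm
      rw [this, aeval_map_algebraMap]; exact minpoly.aeval _ _
    have h2 := congrArg φ h1
    rw [map_zero, aeval_def, hom_eval₂, eval₂_map] at h2
    rw [aeval_def, eval₂_map, ← h2]
    congr 1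
    ext x
    simp [hev]
  have hsep : f.Separable := by
    have h1 := congrArg (Polynomial.map (ev.comp (algebraMap A0 A))) hab
    rw [Polynomial.map_add, Polynomial.map_mul, Polynomial.map_mul, ← derivative_map, map_C] at h1
    have h2 : ev (algebraMap A0 A Δ) ≠ 0 := right_ne_zero_of_mul hne
    refine ⟨C (ev (algebraMap A0 A Δ))⁻¹ * a.map (ev.comp (algebraMap A0 A)),
      C (ev (algebraMap A0 A Δ))⁻¹ * b.map (ev.comp (algebraMap A0 A)), ?_⟩
    rw [mul_assoc, mul_assoc, ← mul_add, h1, ← C_mul]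
    simp [h2]
  have hηsep : IsSeparable k (φ η') := hsep.of_dvd (minpoly.dvd k _ hroot)
  have htopN : IntermediateField.adjoin k {φ η'} = ⊤ := by
    rw [eq_top_iff]
    intro x _
    obtain ⟨c, rfl⟩ := hφ x
    have h1 := Algebra.discr_mul_isIntegral_mem_adjoin K (R := A) (B := pb) (by rw [hgen]; exact hηA)
      (z := (c : M)) c.2
    rw [hgen, Algebra.adjoin_singleton_eq_range_aeval] at h1
    obtain ⟨p, hp⟩ := h1
    have h2 : aeval η' p = algebraMap A _ (algebraMap A0 A δ) * c := by
      apply Subtype.val_injective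
      have : ((aeval η' p : integralClosure A M) : M) = aeval (η' : M) p :=
        (aeval_algHom_apply (integralClosure A M).val η' _).symm
      rw [this]
      refine hp.trans ?_
      rw [← hδ, Algebra.smul_def, IsScalarTower.algebraMap_apply A0 A K,
        ← IsScalarTower.algebraMap_apply A K M]
      rfl
    have h3 := congrArg φ h2
    rw [map_mul, hev, aeval_def, hom_eval₂] at h3
    have h4 : ev (algebraMap A0 A δ) ≠ 0 := left_ne_zero_of_mul hne
    have h5 : φ c = algebraMap k N (ev (algebraMap A0 A δ))⁻¹ * aeval (φ η') (p.map ev) := by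
      rw [aeval_def, eval₂_map]
      have : (algebraMap k N).comp ev = φ.comp (algebraMap A (integralClosure A M)) := by
        ext x; exact (hev x).symm
      rw [this, h3, ← mul_assoc, ← map_mul, inv_mul_cancel₀ h4, map_one, one_mul]
    rw [h5]
    refine mul_mem (IntermediateField.algebraMap_mem _ _) ?_
    exact (IntermediateField.algebra_adjoin_le_adjoin k _) (aeval_mem_adjoin_singleton k _)
  have hint : IsIntegral k (φ η') := hηsep.isIntegral
  constructor
  · have := IntermediateField.adjoin.finiteDimensional hint
    rw [htopN] at this
    exact Module.Finite.equiv (IntermediateField.topEquiv (F := k) (E := N)).toLinearEquiv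
  · have := (IntermediateField.isSeparable_adjoin_simple_iff_isSeparable k N).mpr hηsep
    rw [htopN] at this
    exact AlgEquiv.Algebra.isSeparable (IntermediateField.topEquiv (F := k) (E := N))

lemma aux_h {A Ω : Type*} [CommRing A] [IsDomain A] [Field Ω] (j : A →+* Ω) (f : A[X])
    (hf : f.Monic) (θ : Ω) (h0 : f.eval₂ j θ = 0) :
    ∃ h g : A[X], h.Monic ∧ f = h * g ∧ h.eval₂ j θ = 0 ∧ ∀ p, h.eval p = 0 → θ = j p := by
  classical
  have hex : ∃ d : ℕ, ∃ h g : A[X], h.Monic ∧ f = h * g ∧ h.eval₂ j θ = 0 ∧ h.natDegree = d :=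
    ⟨_, f, 1, hf, (mul_one f).symm, h0, rfl⟩
  obtain ⟨h, g, hm, hfg, hh, hd⟩ := Nat.find_spec hex
  refine ⟨h, g, hm, hfg, hh, fun p hp => ?_⟩
  obtain ⟨h1, hh1⟩ := dvd_iff_isRoot.mpr hp
  have hm1 : h1.Monic := (monic_X_sub_C p).of_mul_monic_left (hh1 ▸ hm)
  rw [hh1, eval₂_mul, eval₂_sub, eval₂_X, eval₂_C] at hh
  rcases mul_eq_zero.mp hh with h2 | h2
  · exact sub_eq_zero.mp h2
  · exfalso
    have hlt : h1.natDegree < Nat.find hex := by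
      rw [← hd, hh1, (monic_X_sub_C p).natDegree_mul hm1, natDegree_X_sub_C]; omega
    exact Nat.find_min hex hlt ⟨h1, (X - C p) * g, hm1, by rw [hfg, hh1]; ring, h2, rfl⟩

lemma aux_bezdvd {A : Type*} [CommRing A] (f h g a b : A[X]) (Δ : A) (hfg : f = h * g)
    (hab : a * f + b * derivative f = C Δ) : ∃ a b, a * h + b * derivative h = C Δ := by
  refine ⟨a * g + b * derivative g, b * g, ?_⟩
  rw [← hab, hfg, derivative_mul]; ring

lemma aux_y {F R : Type*} [Field F] [Field R] (ψ : F[X] →+* R) (hψ : Function.Injective ψ)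
    (g : F[X][X]) (hg : g.Monic) (r : R) (h0 : g.eval₂ ψ r = 0) (a b : F[X]) (hb : b ≠ 0)
    (hr : r * ψ b = ψ a) : ∃ y, r = ψ y := by
  let K := FractionRing F[X]
  let l : K →+* R := IsFractionRing.lift hψ
  have hl : ∀ x, l (algebraMap F[X] K x) = ψ x := fun x => IsFractionRing.lift_algebraMap hψ x
  let s : K := algebraMap F[X] K a / algebraMap F[X] K b
  have hs : l s = r := by
    rw [map_div₀, hl, hl, ← hr, mul_div_cancel_right₀]
    rwa [Ne, map_eq_zero_iff _ hψ]
  have hint : IsIntegral F[X] s := by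
    refine ⟨g, hg, ?_⟩
    apply l.injective
    rw [map_zero, hom_eval₂, hs, ← h0]
    congr 1
    ext x <;> simp [hl]
  obtain ⟨y, hy⟩ := IsIntegrallyClosed.algebraMap_eq_of_integral hint
  exact ⟨y, by rw [← hs, ← hy, hl]⟩

lemma aux_l8 {κ Ω R : Type*} [Field κ] [Field Ω] [Algebra κ Ω] [IsAlgClosed Ω] [Field R]
    [Algebra κ R] (ρ : separableClosure κ Ω →+* R)
    (hρ : ∀ a, ρ (algebraMap κ _ a) = algebraMap κ R a) (z : R) (hz : IsSeparable κ z) :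
    ∃ r, ρ r = z := by
  have h1 : ((minpoly κ z).map (algebraMap κ (separableClosure κ Ω))).Splits := by
    haveI : IsSepClosed (separableClosure κ Ω) :=
      (inferInstance : IsSepClosure κ (separableClosure κ Ω)).sep_closed
    exact IsSepClosed.splits_of_separable _ (Polynomial.Separable.map hz)
  have hm := (minpoly.monic hz.isIntegral)
  have h2 := h1.eq_prod_roots_of_monic (hm.map _)
  have h3 : ((minpoly κ z).map (algebraMap κ (separableClosure κ Ω))).eval₂ ρ z = 0 := by
    rw [eval₂_map]
    have : ρ.comp (algebraMap κ (separableClosure κ Ω)) = algebraMap κ R := by ext a; exact hρ a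
    rw [this]
    exact minpoly.aeval κ z
  rw [h2, eval₂_multiset_prod, Multiset.prod_eq_zero_iff] at h3
  simp only [Multiset.map_map, Multiset.mem_map, Function.comp] at h3
  obtain ⟨r, -, hr⟩ := h3
  refine ⟨r, ?_⟩
  rw [eval₂_sub, eval₂_X, eval₂_C] at hr
  exact (sub_eq_zero.mp hr).symm

/-- the evaluation hom -/
noncomputable def auxJ {F Ω : Type*} [CommRing F] [CommRing Ω] [Algebra F Ω] {n : ℕ}
    (T : Ω) (x : Fin n → Ω) : MvPolynomial (Fin n) F[X] →+* Ω :=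
  MvPolynomial.eval₂Hom (eval₂RingHom (algebraMap F Ω) T) x

lemma auxJ_opt {F Ω : Type*} [CommRing F] [CommRing Ω] [Algebra F Ω] {n : ℕ}
    (T : Ω) (x : Fin n → Ω) (q : MvPolynomial (Option (Fin n)) F) :
    auxJ T x (MvPolynomial.optionEquivRight F (Fin n) q) =
      MvPolynomial.aeval (fun o : Option (Fin n) => o.elim T x) q := by
  have : ((auxJ T x).comp (MvPolynomial.optionEquivRight F (Fin n)).toRingEquiv.toRingHom) =
      (MvPolynomial.aeval (R := F) (fun o : Option (Fin n) => o.elim T x)).toRingHom := by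
    apply MvPolynomial.ringHom_ext
    · intro r
      simp [auxJ, MvPolynomial.optionEquivRight_C]
    · intro o
      cases o <;> simp [auxJ, MvPolynomial.optionEquivRight_X_some, MvPolynomial.optionEquivRight_X_none]
  exact congrArg (fun f => f q) this

lemma auxJ_inj {κ F Ω : Type*} [Field κ] [Field F] [Field Ω] [Algebra κ Ω] [Algebra κ F]
    [Algebra F Ω] [IsScalarTower κ F Ω] [Algebra.IsAlgebraic κ F] {n : ℕ}
    (T : Ω) (x : Fin n → Ω) (h : Function.Injective (auxJ (F := κ) T x)) :
    Function.Injective (auxJ (F := F) T x) := by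
  have h1 : AlgebraicIndependent κ (fun o : Option (Fin n) => o.elim T x) := by
    intro p q hpq
    rw [← auxJ_opt, ← auxJ_opt] at hpq
    exact (MvPolynomial.optionEquivRight κ (Fin n)).injective (h hpq)
  have h2 : AlgebraicIndependent F (fun o : Option (Fin n) => o.elim T x) := h1.extendScalars F
  intro p q hpq
  obtain ⟨p, rfl⟩ := (MvPolynomial.optionEquivRight F (Fin n)).surjective p
  obtain ⟨q, rfl⟩ := (MvPolynomial.optionEquivRight F (Fin n)).surjective q
  rw [auxJ_opt, auxJ_opt] at hpq
  rw [h2 hpq]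

lemma auxJ_map {κ F Ω : Type*} [Field κ] [Field F] [Field Ω] [Algebra κ Ω] [Algebra κ F]
    [Algebra F Ω] [IsScalarTower κ F Ω] {n : ℕ} (T : Ω) (x : Fin n → Ω) :
    (auxJ (F := F) T x).comp (MvPolynomial.map (mapRingHom (algebraMap κ F))) =
      auxJ (F := κ) T x := by
  apply MvPolynomial.ringHom_ext
  · intro r
    simp [auxJ, eval₂_map, ← IsScalarTower.algebraMap_eq]
  · intro i
    simp [auxJ]

lemma aux_coef {F Ω : Type*} [Field F] [Field Ω] [Algebra F Ω] {n : ℕ} (T : Ω) (x : Fin n → Ω)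
    (hinj : Function.Injective (auxJ (F := F) T x)) (s : F →+* F) (σ : Ω →+* Ω)
    (hs : ∀ c, σ (algebraMap F Ω c) = algebraMap F Ω (s c)) (hT : σ T = T) (hx : ∀ i, σ (x i) = x i)
    (p : MvPolynomial (Fin n) F[X]) :
    σ (auxJ T x p) = auxJ T x p ↔ ∀ m i, s ((p.coeff m).coeff i) = (p.coeff m).coeff i := by
  have h1 : σ.comp (auxJ T x) = (auxJ T x).comp (MvPolynomial.map (mapRingHom s)) := by
    apply MvPolynomial.ringHom_ext
    · intro r
      have : σ.comp (algebraMap F Ω) = (algebraMap F Ω).comp s := by ext c; exact hs c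
      simp [auxJ, eval₂_map, hom_eval₂, this, hT]
    · intro i
      simp [auxJ, hx]
  have h2 : σ (auxJ T x p) = auxJ T x (MvPolynomial.map (mapRingHom s) p) :=
    congrArg (fun f => f p) h1
  rw [h2, hinj.eq_iff, MvPolynomial.ext_iff]
  refine forall_congr' fun m => ?_
  rw [MvPolynomial.coeff_map, coe_mapRingHom, Polynomial.ext_iff]
  refine forall_congr' fun i => ?_
  rw [coeff_map]

lemma aux_sepM {K Ω : Type*} [Field K] [Field Ω] [Algebra K Ω] [IsAlgClosed Ω]
    [Algebra.IsAlgebraic K Ω] (M : IntermediateField K Ω)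
    (c : Ω) (hc : IsSeparable K c) (h : ∀ σ : Ω ≃ₐ[K] Ω, (∀ x ∈ M, σ x = x) → σ c = c) : c ∈ M := by
  by_contra hne
  have hcM : IsSeparable M c := hc.tower_top M
  haveI : IsAlgClosure M Ω := ⟨inferInstance, Algebra.IsAlgebraic.tower_top (K := K) M⟩
  have hn : Normal M Ω := IsAlgClosure.normal M Ω
  obtain ⟨c', hc', hconj⟩ := (notMem_iff_exists_ne_and_isConjRoot (K := M) hcM
    (hn.splits c)).mp (by
      intro hb
      obtain ⟨y, hy⟩ := Algebra.mem_bot.mp hb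
      exact hne (hy ▸ y.2))
  obtain ⟨σ, hσ⟩ := (isConjRoot_iff_exists_algEquiv (K := M)).mp hconj
  apply hc'
  have h1 := h (σ.restrictScalars K) (fun x hx => σ.commutes ⟨x, hx⟩)
  have h2 : σ c = c := h1
  exact σ.injective (h2.trans hσ.symm)

end PartIII
section PartIV
universe uN
open Polynomial
attribute [local instance] MvPolynomial.algebraMvPolynomial


section
variable {κ : Type*} [Field κ] {n : ℕ} {K Ω : Type*} [Field K] [Field Ω]
  [Algebra (MvPolynomial (Fin n) (RatFunc κ)) K]
  [IsFractionRing (MvPolynomial (Fin n) (RatFunc κ)) K]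
  [Algebra (MvPolynomial (Fin n) κ[X]) K]
  [IsFractionRing (MvPolynomial (Fin n) κ[X]) K]
  [IsScalarTower (MvPolynomial (Fin n) κ[X]) (MvPolynomial (Fin n) (RatFunc κ)) K]
  [Algebra K Ω] [Algebra (MvPolynomial (Fin n) (RatFunc κ)) Ω]
  [Algebra (MvPolynomial (Fin n) κ[X]) Ω] [Algebra κ Ω] [Algebra κ K]
  [IsScalarTower (MvPolynomial (Fin n) (RatFunc κ)) K Ω]
  [IsScalarTower (MvPolynomial (Fin n) κ[X]) K Ω]
  [IsScalarTower (MvPolynomial (Fin n) κ[X]) (MvPolynomial (Fin n) (RatFunc κ)) Ω]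
  [IsScalarTower κ K Ω] [IsScalarTower κ (MvPolynomial (Fin n) (RatFunc κ)) Ω]
  [IsAlgClosed Ω] [Algebra.IsAlgebraic K Ω]

/-- image of T -/
noncomputable def auxT0 (κ : Type*) [Field κ] (n : ℕ) (Ω : Type*) [Field Ω]
    [Algebra (MvPolynomial (Fin n) (RatFunc κ)) Ω] : Ω :=
  algebraMap (MvPolynomial (Fin n) (RatFunc κ)) Ω (MvPolynomial.C RatFunc.X)

/-- images of the variables -/
noncomputable def auxX0 (κ : Type*) [Field κ] (n : ℕ) (Ω : Type*) [Field Ω]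
    [Algebra (MvPolynomial (Fin n) (RatFunc κ)) Ω] (i : Fin n) : Ω :=
  algebraMap (MvPolynomial (Fin n) (RatFunc κ)) Ω (MvPolynomial.X i)

lemma auxJ0 : auxJ (F := κ) (auxT0 κ n Ω) (auxX0 κ n Ω) =
    algebraMap (MvPolynomial (Fin n) κ[X]) Ω := by
  have h1 : algebraMap (MvPolynomial (Fin n) κ[X]) Ω =
    (algebraMap (MvPolynomial (Fin n) (RatFunc κ)) Ω).comp
      (algebraMap (MvPolynomial (Fin n) κ[X]) (MvPolynomial (Fin n) (RatFunc κ))) :=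
    IsScalarTower.algebraMap_eq _ _ _
  have h2 : algebraMap κ Ω = (algebraMap (MvPolynomial (Fin n) (RatFunc κ)) Ω).comp
      (algebraMap κ (MvPolynomial (Fin n) (RatFunc κ))) := IsScalarTower.algebraMap_eq _ _ _
  rw [h1]
  apply MvPolynomial.ringHom_ext
  · intro r
    simp only [auxJ, MvPolynomial.coe_eval₂Hom, MvPolynomial.eval₂_C, coe_eval₂RingHom, h2, auxT0]
    rw [← hom_eval₂, RingHom.comp_apply]
    congr 1
    rw [MvPolynomial.algebraMap_def, MvPolynomial.map_C]
    have : algebraMap κ (MvPolynomial (Fin n) (RatFunc κ)) =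
      MvPolynomial.C.comp (algebraMap κ (RatFunc κ)) := rfl
    rw [this, ← hom_eval₂]
    congr 1
    rw [← aeval_def, RatFunc.aeval_X_left_eq_algebraMap]
  · intro i
    simp only [auxJ, auxX0, MvPolynomial.coe_eval₂Hom, MvPolynomial.eval₂_X, RingHom.comp_apply]
    rw [MvPolynomial.algebraMap_def, MvPolynomial.map_X]


/-- specialization over `k` -/
noncomputable def auxEv (κ : Type*) [Field κ] {n : ℕ} (t : Fin n → ℤ[X]) :
    MvPolynomial (Fin n) (RatFunc κ) →+* RatFunc κ :=
  MvPolynomial.eval (fun i => algebraMap κ[X] (RatFunc κ) ((t i).map (Int.castRingHom κ)))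

/-- specialization over `F[X]` -/
noncomputable def auxEvF (F : Type*) [Field F] {n : ℕ} (t : Fin n → ℤ[X]) :
    MvPolynomial (Fin n) F[X] →+* F[X] :=
  MvPolynomial.eval (fun i => (t i).map (Int.castRingHom F))

/-- base change map -/
noncomputable def auxm (κ F : Type*) [Field κ] [Field F] [Algebra κ F] (n : ℕ) :
    MvPolynomial (Fin n) κ[X] →+* MvPolynomial (Fin n) F[X] :=
  MvPolynomial.map (mapRingHom (algebraMap κ F))

lemma auxEvF_map {κ F : Type*} [Field κ] [Field F] [Algebra κ F] {n : ℕ} (t : Fin n → ℤ[X])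
    (a : MvPolynomial (Fin n) κ[X]) :
    auxEvF F t (auxm κ F n a) = mapRingHom (algebraMap κ F) (auxEvF κ t a) := by
  have : (auxEvF F t).comp (auxm κ F n) = (mapRingHom (algebraMap κ F)).comp (auxEvF κ t) := by
    apply MvPolynomial.ringHom_ext
    · intro r
      simp [auxEvF, auxm]
    · intro i
      simp only [auxEvF, auxm, RingHom.comp_apply, MvPolynomial.map_X, MvPolynomial.eval_X,
        coe_mapRingHom, Polynomial.map_map]
      congr 1
      exact RingHom.ext_int _ _
  exact congrArg (fun g => g a) this

lemma auxEv_alg {κ : Type*} [Field κ] {n : ℕ} (t : Fin n → ℤ[X])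
    (a : MvPolynomial (Fin n) κ[X]) :
    auxEv κ t (algebraMap (MvPolynomial (Fin n) κ[X]) (MvPolynomial (Fin n) (RatFunc κ)) a) =
      algebraMap κ[X] (RatFunc κ) (auxEvF κ t a) := by
  have : (auxEv κ t).comp (algebraMap (MvPolynomial (Fin n) κ[X]) (MvPolynomial (Fin n) (RatFunc κ)))
      = (algebraMap κ[X] (RatFunc κ)).comp (auxEvF κ t) := by
    rw [MvPolynomial.algebraMap_def]
    apply MvPolynomial.ringHom_ext
    · intro r
      simp [auxEvF, auxEv]
    · intro i
      simp [auxEvF, auxEv]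
  exact congrArg (fun g => g a) this

lemma auxm_inj (κ F : Type*) [Field κ] [Field F] [Algebra κ F] (n : ℕ) :
    Function.Injective (auxm κ F n) :=
  MvPolynomial.map_injective _ (Polynomial.map_injective _ (algebraMap κ F).injective)

lemma auxJ_injF (hK : Function.Injective (algebraMap (MvPolynomial (Fin n) κ[X]) Ω)) :
    Function.Injective (auxJ (F := separableClosure κ Ω) (auxT0 κ n Ω) (auxX0 κ n Ω)) := by
  apply auxJ_inj (κ := κ)
  rw [auxJ0]; exact hK

lemma auxJ_m (a : MvPolynomial (Fin n) κ[X]) :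
    auxJ (F := separableClosure κ Ω) (auxT0 κ n Ω) (auxX0 κ n Ω) (auxm κ _ n a) =
      algebraMap _ Ω a := by
  rw [← auxJ0, ← auxJ_map (κ := κ) (F := separableClosure κ Ω)]; rfl

lemma aux_p1 (M : IntermediateField K Ω) [FiniteDimensional K M] [IsGalois K M] :
    ∃ t : Fin n → ℤ[X],
      (∀ (N : Type uN) (_ : Field N) (_ : Algebra (RatFunc κ) N)
        (φ : integralClosure (MvPolynomial (Fin n) (RatFunc κ)) M →+* N),
        Function.Surjective φ → (∀ a, φ (algebraMap _ _ a) = algebraMap _ N (auxEv κ t a)) →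
        FiniteDimensional (RatFunc κ) N ∧ Algebra.IsSeparable (RatFunc κ) N) ∧
      ∀ U : Subgroup (M ≃ₐ[K] M), ∃ (θ : M) (f : (MvPolynomial (Fin n) κ[X])[X]),
        f.Monic ∧ f.eval₂ (algebraMap _ M) θ = 0 ∧ (∀ γ, γ θ = θ ↔ γ ∈ U) ∧
        (∃ a b Δ, a * f + b * derivative f = C Δ ∧ auxEv κ t (algebraMap _ _ Δ) ≠ 0) ∧
        ∃ h : (MvPolynomial (Fin n) (separableClosure κ Ω)[X])[X], h.Monic ∧
          h.eval₂ (auxJ (auxT0 κ n Ω) (auxX0 κ n Ω)) (θ : Ω) = 0 ∧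
          ((∃ p, (θ : Ω) = auxJ (F := separableClosure κ Ω) (auxT0 κ n Ω) (auxX0 κ n Ω) p) ∨
            ∀ y, (h.map (auxEvF _ t)).eval y ≠ 0) := by
  classical
  set F := separableClosure κ Ω with hF
  set j := auxJ (F := F) (auxT0 κ n Ω) (auxX0 κ n Ω) with hj
  obtain ⟨δ, hδ0, hδ⟩ := aux_fs.{uN} (A0 := MvPolynomial (Fin n) κ[X])
    (A := MvPolynomial (Fin n) (RatFunc κ)) (k := RatFunc κ) (K := K) (M := M)
  have h1 : ∀ U : Subgroup (M ≃ₐ[K] M), ∃ (θ : M) (f : (MvPolynomial (Fin n) κ[X])[X])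
      (Δ : MvPolynomial (Fin n) κ[X]) (h : (MvPolynomial (Fin n) F[X])[X]),
      f.Monic ∧ f.eval₂ (algebraMap _ M) θ = 0 ∧ (∀ γ, γ θ = θ ↔ γ ∈ U) ∧ Δ ≠ 0 ∧
      (∃ a b, a * f + b * derivative f = C Δ) ∧ h.Monic ∧ h.eval₂ j (θ : Ω) = 0 ∧
      (∃ a b, a * h + b * derivative h = C (auxm κ F n Δ)) ∧
      ∀ p, h.eval p = 0 → (θ : Ω) = j p := by
    intro U
    obtain ⟨θ, hθi, hθ⟩ := aux_theta (A := MvPolynomial (Fin n) κ[X]) (K := K) U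
    have hsep : ((minpoly (MvPolynomial (Fin n) κ[X]) θ).map
        (algebraMap (MvPolynomial (Fin n) κ[X]) K)).Separable := by
      rw [← minpoly.isIntegrallyClosed_eq_field_fractions' K hθi]
      exact Algebra.IsSeparable.isSeparable K θ
    obtain ⟨Δ, hΔ0, a, b, hab⟩ := aux_bez (K := K) _ hsep
    set f := minpoly (MvPolynomial (Fin n) κ[X]) θ with hf
    have hfm : f.Monic := minpoly.monic hθi
    have hf0 : f.eval₂ (algebraMap _ M) θ = 0 := by
      rw [← aeval_def]; exact minpoly.aeval _ _
    obtain ⟨h, g, hm, hfg, hh, hp⟩ := aux_h j (f.map (auxm κ F n)) (hfm.map _) (θ : Ω) (by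
      rw [eval₂_map]
      have e : j.comp (auxm κ F n) = (algebraMap M Ω).comp (algebraMap _ M) := by
        refine RingHom.ext fun x => ?_
        rw [RingHom.comp_apply, RingHom.comp_apply, hj, auxJ_m]
        rfl
      rw [e]
      have := hom_eval₂ f (algebraMap _ M) (algebraMap M Ω) θ
      rw [hf0, map_zero] at this
      exact this.symm)
    refine ⟨θ, f, Δ, h, hfm, hf0, hθ, hΔ0, ⟨a, b, hab⟩, hm, hh, ?_, hp⟩
    refine aux_bezdvd _ h g (a.map (auxm κ F n)) (b.map (auxm κ F n)) _ hfg ?_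
    have := congrArg (Polynomial.map (auxm κ F n)) hab
    simpa [derivative_map] using this
  choose θ f Δ h hfm hf0 hθ hΔ0 hab hhm hh0 hhab hhp using h1
  have hfin : Finite (Subgroup (M ≃ₐ[K] M)) := inferInstance
  haveI : Fintype (Subgroup (M ≃ₐ[K] M)) := Fintype.ofFinite _
  let D : MvPolynomial (Fin n) κ[X] := δ * ∏ U, Δ U
  have hD0 : D ≠ 0 := mul_ne_zero hδ0 (Finset.prod_ne_zero_iff.mpr fun U _ => hΔ0 U)
  have hΔD : ∀ U, Δ U ∣ D := fun U => (Finset.dvd_prod_of_mem Δ (Finset.mem_univ U)).mul_left _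
  obtain ⟨t, ht, hty⟩ := aux_HIT F n
    ((Finset.univ.filter (fun U => ∀ p, (h U).eval p ≠ 0)).image h) (auxm κ F n D)
    (by rwa [Ne, map_eq_zero_iff _ (auxm_inj κ F n)]) (by
      intro g hg
      obtain ⟨U, hU, rfl⟩ := Finset.mem_image.mp hg
      refine ⟨hhm U, ?_, (Finset.mem_filter.mp hU).2⟩
      obtain ⟨a, b, hab⟩ := hhab U
      obtain ⟨e, he⟩ := hΔD U
      refine ⟨C (auxm κ F n e) * a, C (auxm κ F n e) * b, ?_⟩
      rw [he, mul_assoc, mul_assoc, ← mul_add, hab, ← C_mul, ← map_mul, mul_comm e])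
  have ht' : auxEv κ t (algebraMap _ _ D) ≠ 0 := by
    rw [auxEv_alg]
    intro h0
    apply ht
    rw [map_eq_zero_iff _ (IsFractionRing.injective κ[X] (RatFunc κ))] at h0
    have := auxEvF_map (F := F) t D
    rw [h0, map_zero] at this
    exact this
  have hdvd : ∀ x, x ∣ D → auxEv κ t (algebraMap _ _ x) ≠ 0 := by
    rintro x ⟨e, he⟩ h0
    apply ht'
    rw [he, map_mul, map_mul, h0, zero_mul]
  refine ⟨t, fun N _ _ φ hs he => hδ N _ _ (auxEv κ t) φ hs he (hdvd _ (dvd_mul_right _ _)), fun U => ?_⟩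
  obtain ⟨a, b, hab'⟩ := hab U
  refine ⟨θ U, f U, hfm U, hf0 U, hθ U, ⟨a, b, Δ U, hab', hdvd _ (hΔD U)⟩, h U, hhm U, hh0 U, ?_⟩
  by_cases hc : ∃ p, (h U).eval p = 0
  · obtain ⟨p, hp⟩ := hc
    exact Or.inl ⟨p, hhp U p hp⟩
  · push Not at hc
    exact Or.inr (hty _ (Finset.mem_image_of_mem _ (Finset.mem_filter.mpr ⟨Finset.mem_univ U, hc⟩)))
end

end PartIV
section PartV
universe uN
open Polynomial
attribute [local instance] MvPolynomial.algebraMvPolynomial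

section
variable {κ : Type*} [Field κ] {n : ℕ} {K Ω : Type*} [Field K] [Field Ω]
  [Algebra (MvPolynomial (Fin n) (RatFunc κ)) K]
  [Algebra K Ω] [Algebra (MvPolynomial (Fin n) (RatFunc κ)) Ω]
  [Algebra κ Ω] [Algebra κ K]
  [IsScalarTower (MvPolynomial (Fin n) (RatFunc κ)) K Ω]
  [IsScalarTower κ K Ω]
  [IsAlgClosed Ω] [Algebra.IsAlgebraic K Ω]

lemma aux_galU (hinj : Function.Injective
      (auxJ (F := separableClosure κ Ω) (auxT0 κ n Ω) (auxX0 κ n Ω)))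
    (M : IntermediateField K Ω) [FiniteDimensional K M] [IsGalois K M]
    (U : Subgroup (M ≃ₐ[K] M)) (θ : M) (hθ : ∀ γ : M ≃ₐ[K] M, γ θ = θ ↔ γ ∈ U)
    (p : MvPolynomial (Fin n) (separableClosure κ Ω)[X])
    (hp : (θ : Ω) = auxJ (auxT0 κ n Ω) (auxX0 κ n Ω) p) (γ : M ≃ₐ[K] M)
    (hγ : ∀ c : M, IsSeparable κ c → (∀ u ∈ U, u c = c) → γ c = c) : γ ∈ U := by
  haveI : IsAlgClosure K Ω := ⟨inferInstance, inferInstance⟩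
  haveI : Normal K Ω := IsAlgClosure.normal K Ω
  have key : ∀ σ : Ω ≃ₐ[K] Ω, σ (θ : Ω) = θ ↔ ∀ m i, σ (((p.coeff m).coeff i : separableClosure κ Ω) : Ω) =
      ((p.coeff m).coeff i : separableClosure κ Ω) := by
    intro σ
    have hmem : ∀ c : separableClosure κ Ω, σ (c : Ω) ∈ separableClosure κ Ω := by
      intro c
      have := c.2
      rw [mem_separableClosure_iff] at this ⊢
      exact this.map (σ.toAlgHom.restrictScalars κ) σ.injective
    let s : separableClosure κ Ω →+* separableClosure κ Ω :=
      RingHom.codRestrict ((σ : Ω →+* Ω).comp (algebraMap (separableClosure κ Ω) Ω)) _ hmem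
    have hfix : ∀ a, σ (algebraMap (MvPolynomial (Fin n) (RatFunc κ)) Ω a) = algebraMap _ Ω a := by
      intro a
      rw [IsScalarTower.algebraMap_apply _ K Ω, σ.commutes]
    have := aux_coef (auxT0 κ n Ω) (auxX0 κ n Ω) hinj s (σ : Ω →+* Ω) (fun c => rfl) (hfix _)
      (fun i => hfix _) p
    rw [← hp] at this
    refine this.trans (forall_congr' fun m => forall_congr' fun i => ?_)
    exact Subtype.ext_iff
  have hcM : ∀ m i, (((p.coeff m).coeff i : separableClosure κ Ω) : Ω) ∈ M := by
    intro m i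
    apply aux_sepM
    · have := ((p.coeff m).coeff i : separableClosure κ Ω).2
      rw [mem_separableClosure_iff] at this
      exact this.tower_top K
    · intro σ hσ
      exact (key σ).mp (hσ _ θ.2) m i
  have hlift : ∀ (g : M ≃ₐ[K] M) (x : M), (g.liftNormal Ω) (x : Ω) = (g x : M) := fun g x =>
    g.liftNormal_commutes Ω x
  rw [← hθ]
  apply Subtype.ext
  rw [← hlift]
  rw [key]
  intro m i
  have h1 := hγ ⟨_, hcM m i⟩ (by
    have := ((p.coeff m).coeff i : separableClosure κ Ω).2
    rw [mem_separableClosure_iff] at this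
    exact IsSeparable.of_algHom (M.val.restrictScalars κ) this) (by
    intro u hu
    apply Subtype.ext
    rw [← hlift]
    refine (key (u.liftNormal Ω)).mp ?_ m i
    rw [hlift, (hθ u).mpr hu])
  have h2 := hlift γ ⟨_, hcM m i⟩
  rw [h1] at h2
  exact h2
end

/-- rational values of `ψ` -/
def auxFF {k F R : Type*} [Field k] [Field F] [Field R] [Algebra k R] (ψ : F[X] →+* R)
    (hψ : Function.Injective ψ)
    (hk : ∀ r : k, ∃ a b, b ≠ 0 ∧ algebraMap k R r * ψ b = ψ a) : IntermediateField k R where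
  carrier := {z | ∃ a b, b ≠ 0 ∧ z * ψ b = ψ a}
  mul_mem' := by
    rintro x y ⟨a, b, hb, h⟩ ⟨a', b', hb', h'⟩
    exact ⟨a * a', b * b', mul_ne_zero hb hb', by rw [map_mul, map_mul, ← h, ← h']; ring⟩
  add_mem' := by
    rintro x y ⟨a, b, hb, h⟩ ⟨a', b', hb', h'⟩
    exact ⟨a * b' + a' * b, b * b', mul_ne_zero hb hb', by
      rw [map_mul, map_add, map_mul, map_mul, ← h, ← h']; ring⟩
  algebraMap_mem' := hk
  inv_mem' := by
    rintro x ⟨a, b, hb, h⟩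
    by_cases hx : x = 0
    · exact ⟨0, 1, one_ne_zero, by simp [hx]⟩
    · refine ⟨b, a, ?_, ?_⟩
      · rintro rfl
        rw [map_zero, mul_eq_zero, map_eq_zero_iff _ hψ] at h
        tauto
      · rw [← h]; field_simp

section
variable {κ : Type*} [Field κ] {n : ℕ} {Ω : Type*} [Field Ω]
  [Algebra (MvPolynomial (Fin n) (RatFunc κ)) Ω]
  [Algebra κ Ω] [IsScalarTower κ (MvPolynomial (Fin n) (RatFunc κ)) Ω]
  [IsAlgClosed Ω] {R : Type*} [Field R] [Algebra (RatFunc κ) R] [Algebra κ R]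
  [IsScalarTower κ (RatFunc κ) R]

lemma aux_psi (t : Fin n → ℤ[X])
    (Φ : integralClosure (MvPolynomial (Fin n) (RatFunc κ)) Ω →+* R)
    (hΦ : ∀ a, Φ (algebraMap _ _ a) = algebraMap _ R (auxEv κ t a)) :
    ∃ (ρ : separableClosure κ Ω →+* R) (ψ : (separableClosure κ Ω)[X] →+* R)
      (J : MvPolynomial (Fin n) (separableClosure κ Ω)[X] →+*
        integralClosure (MvPolynomial (Fin n) (RatFunc κ)) Ω),
      (∀ a, ρ (algebraMap κ _ a) = algebraMap κ R a) ∧ Function.Injective ψ ∧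
      (∀ c, ψ (C c) = ρ c) ∧ (∀ r : RatFunc κ, ∃ a b, b ≠ 0 ∧ algebraMap _ R r * ψ b = ψ a) ∧
      (∀ p, (J p : Ω) = auxJ (auxT0 κ n Ω) (auxX0 κ n Ω) p) ∧
      (∀ p, Φ (J p) = ψ (auxEvF _ t p)) := by
  have hmem : ∀ c : separableClosure κ Ω, algebraMap _ Ω c ∈
      integralClosure (MvPolynomial (Fin n) (RatFunc κ)) Ω := by
    intro c
    have := c.2
    rw [mem_separableClosure_iff] at this
    rw [mem_integralClosure_iff]
    exact this.isIntegral.tower_top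
  let ι : separableClosure κ Ω →+* integralClosure (MvPolynomial (Fin n) (RatFunc κ)) Ω :=
    RingHom.codRestrict (algebraMap (separableClosure κ Ω) Ω) _ hmem
  let ρ : separableClosure κ Ω →+* R := Φ.comp ι
  have hρ : ∀ a, ρ (algebraMap κ _ a) = algebraMap κ R a := by
    intro a
    have : ι (algebraMap κ _ a) = algebraMap (MvPolynomial (Fin n) (RatFunc κ)) _ (algebraMap κ _ a) := by
      apply Subtype.ext
      exact (IsScalarTower.algebraMap_apply κ (MvPolynomial (Fin n) (RatFunc κ)) Ω a)
    simp only [ρ, RingHom.comp_apply]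
    rw [this, hΦ, IsScalarTower.algebraMap_apply κ (RatFunc κ) R]
    congr 1
    exact MvPolynomial.eval_C _
  let ψ : (separableClosure κ Ω)[X] →+* R := eval₂RingHom ρ (algebraMap (RatFunc κ) R RatFunc.X)
  have hψ : Function.Injective ψ := by
    letI : Algebra (separableClosure κ Ω) R := ρ.toAlgebra
    haveI : IsScalarTower κ (separableClosure κ Ω) R := IsScalarTower.of_algebraMap_eq (fun a => (hρ a).symm)
    have h1 : Transcendental κ (algebraMap (RatFunc κ) R RatFunc.X) :=
      (transcendental_algebraMap_iff (algebraMap (RatFunc κ) R).injective).mpr RatFunc.transcendental_X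
    have h2 : Transcendental (separableClosure κ Ω) (algebraMap (RatFunc κ) R RatFunc.X) :=
      fun h => h1 (h.restrictScalars κ)
    rw [transcendental_iff_injective] at h2
    exact h2
  have hψκ : ∀ a : κ[X], ψ (a.map (algebraMap κ _)) = algebraMap (RatFunc κ) R (algebraMap κ[X] _ a) := by
    intro a
    have : ψ.comp (mapRingHom (algebraMap κ _)) = (algebraMap (RatFunc κ) R).comp (algebraMap κ[X] _) := by
      apply Polynomial.ringHom_ext
      · intro c
        simp [ψ, hρ]
        rw [IsScalarTower.algebraMap_apply κ (RatFunc κ) R]; rfl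
      · simp [ψ]
    exact congrArg (fun g => g a) this
  let J : MvPolynomial (Fin n) (separableClosure κ Ω)[X] →+*
        integralClosure (MvPolynomial (Fin n) (RatFunc κ)) Ω :=
    MvPolynomial.eval₂Hom (eval₂RingHom ι (algebraMap (MvPolynomial (Fin n) (RatFunc κ)) _
      (MvPolynomial.C RatFunc.X))) (fun i => algebraMap (MvPolynomial (Fin n) (RatFunc κ)) _
      (MvPolynomial.X i))
  refine ⟨ρ, ψ, J, hρ, hψ, fun c => by simp [ψ], fun r => ?_, fun p => ?_, fun p => ?_⟩
  · refine ⟨r.num.map (algebraMap κ _), r.denom.map (algebraMap κ _), ?_, ?_⟩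
    · rw [Polynomial.map_ne_zero_iff (algebraMap κ (separableClosure κ Ω)).injective]
      exact r.denom_ne_zero
    · rw [hψκ, hψκ, ← map_mul]
      congr 1
      have h3 := RatFunc.num_div_denom r
      have h4 : algebraMap κ[X] (RatFunc κ) r.denom ≠ 0 := by
        simpa using r.denom_ne_zero
      rw [div_eq_iff h4] at h3
      exact h3.symm
  · have : ((integralClosure (MvPolynomial (Fin n) (RatFunc κ)) Ω).val : _ →+* Ω).comp J =
        auxJ (auxT0 κ n Ω) (auxX0 κ n Ω) := by
      apply MvPolynomial.ringHom_ext
      · intro r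
        simp only [J, auxJ, RingHom.comp_apply, MvPolynomial.coe_eval₂Hom, MvPolynomial.eval₂_C,
          coe_eval₂RingHom, hom_eval₂]
        rfl
      · intro i
        simp only [J, auxJ, RingHom.comp_apply, MvPolynomial.coe_eval₂Hom, MvPolynomial.eval₂_X]
        rfl
    exact congrArg (fun g => g p) this
  · have : Φ.comp J = ψ.comp (auxEvF _ t) := by
      apply MvPolynomial.ringHom_ext
      · intro r
        simp only [J, auxEvF, RingHom.comp_apply, MvPolynomial.coe_eval₂Hom, MvPolynomial.eval₂_C,
          coe_eval₂RingHom, hom_eval₂, MvPolynomial.eval_C, ψ, hΦ, auxEv]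
        rfl
      · intro i
        simp only [J, auxEvF, RingHom.comp_apply, MvPolynomial.coe_eval₂Hom, MvPolynomial.eval₂_X,
          MvPolynomial.eval_X, hΦ, auxEv]
        rw [← hψκ, Polynomial.map_map]
        congr 2
        exact RingHom.ext_int _ _
    exact congrArg (fun g => g p) this
end

section
variable {κ : Type*} [Field κ] {n : ℕ} {K Ω : Type*} [Field K] [Field Ω]
  [Algebra (MvPolynomial (Fin n) (RatFunc κ)) K]
  [IsFractionRing (MvPolynomial (Fin n) (RatFunc κ)) K]
  [Algebra (MvPolynomial (Fin n) κ[X]) K]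
  [IsFractionRing (MvPolynomial (Fin n) κ[X]) K]
  [IsScalarTower (MvPolynomial (Fin n) κ[X]) (MvPolynomial (Fin n) (RatFunc κ)) K]
  [Algebra K Ω] [Algebra (MvPolynomial (Fin n) (RatFunc κ)) Ω]
  [Algebra (MvPolynomial (Fin n) κ[X]) Ω] [Algebra κ Ω] [Algebra κ K]
  [IsScalarTower (MvPolynomial (Fin n) (RatFunc κ)) K Ω]
  [IsScalarTower (MvPolynomial (Fin n) κ[X]) K Ω]
  [IsScalarTower (MvPolynomial (Fin n) κ[X]) (MvPolynomial (Fin n) (RatFunc κ)) Ω]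
  [IsScalarTower κ K Ω] [IsScalarTower κ (MvPolynomial (Fin n) (RatFunc κ)) Ω]
  [IsAlgClosed Ω] [Algebra.IsAlgebraic K Ω]

lemma aux_N {A k M R : Type*} [CommRing A] [Field k] [Field M] [Field R] [Algebra A M] [Algebra k R]
    (ev : A →+* k) (hev : Function.Surjective ev) (Φ : integralClosure A M →+* R)
    (hΦ : ∀ a, Φ (algebraMap A _ a) = algebraMap k R (ev a)) :
    ∃ (N : IntermediateField k R) (φ : integralClosure A M →+* N), Function.Surjective φ ∧
      (∀ b, (φ b : R) = Φ b) ∧ ∀ a, φ (algebraMap A _ a) = algebraMap k N (ev a) := by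
  have hint : ∀ b, IsIntegral k (Φ b) := by
    intro b
    have hb : IsIntegral A b := by
      have := b.2
      rw [mem_integralClosure_iff] at this
      exact (isIntegral_algHom_iff (integralClosure A M).val Subtype.val_injective).mp this
    obtain ⟨f, hf, h0⟩ := hb
    refine ⟨f.map ev, hf.map _, ?_⟩
    rw [eval₂_map]
    have e : (algebraMap k R).comp ev = Φ.comp (algebraMap A _) := by
      ext1 a; exact (hΦ a).symm
    rw [e, ← hom_eval₂, h0, map_zero]
  let S : Subalgebra k R :=
    { Φ.range with
      algebraMap_mem' := fun r => by
        obtain ⟨a, rfl⟩ := hev r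
        exact ⟨_, hΦ a⟩ }
  let N : IntermediateField k R := S.toIntermediateField (by
    rintro x ⟨b, rfl⟩
    exact Subalgebra.inv_mem_of_algebraic S (x := ⟨Φ b, ⟨b, rfl⟩⟩) (hint b).isAlgebraic)
  let φ : integralClosure A M →+* N := RingHom.codRestrict Φ N (fun b => ⟨b, rfl⟩)
  refine ⟨N, φ, ?_, fun b => rfl, fun a => Subtype.ext (hΦ a)⟩
  rintro ⟨x, b, rfl⟩
  exact ⟨b, rfl⟩

theorem aux_p2 (M : IntermediateField K Ω) [FiniteDimensional K M] [IsGalois K M] :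
    ∃ t : Fin n → ℤ[X], ∀ (R : Type uN) [Field R] [Algebra (RatFunc κ) R] [Algebra κ R]
      [IsScalarTower κ (RatFunc κ) R]
      (Φ : integralClosure (MvPolynomial (Fin n) (RatFunc κ)) Ω →+* R)
      (_ : ∀ a, Φ (algebraMap _ _ a) = algebraMap _ R (auxEv κ t a)),
      ∃ (N : IntermediateField (RatFunc κ) R)
        (φ : integralClosure (MvPolynomial (Fin n) (RatFunc κ)) M →+* N)
        (FF : IntermediateField (RatFunc κ) N),
        (∀ (b : integralClosure (MvPolynomial (Fin n) (RatFunc κ)) M)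
          (b' : integralClosure (MvPolynomial (Fin n) (RatFunc κ)) Ω), (b' : Ω) = (b : M) → (φ b : R) = Φ b') ∧
        AuxSpec κ (RatFunc κ) (MvPolynomial (Fin n) (RatFunc κ)) K M N (auxEv κ t) φ FF := by
  obtain ⟨t, hsep, hU⟩ := aux_p1.{uN} (κ := κ) (n := n) M
  refine ⟨t, fun R _ _ _ _ Φ hΦ => ?_⟩
  have hevs : Function.Surjective (auxEv κ t) := fun r => ⟨MvPolynomial.C r, MvPolynomial.eval_C _⟩
  let inc : integralClosure (MvPolynomial (Fin n) (RatFunc κ)) M →ₐ[MvPolynomial (Fin n) (RatFunc κ)]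
    integralClosure (MvPolynomial (Fin n) (RatFunc κ)) Ω :=
    (M.val.restrictScalars (MvPolynomial (Fin n) (RatFunc κ))).mapIntegralClosure
  have hinc : ∀ b, ((inc b : Ω)) = (b : M) := fun b => rfl
  obtain ⟨N, φ, hφs, hφ, hφev⟩ := aux_N (auxEv κ t) hevs
    (Φ.comp (inc : _ →+* integralClosure (MvPolynomial (Fin n) (RatFunc κ)) Ω))
    (fun a => by rw [RingHom.comp_apply, ← hΦ]; congr 1; exact inc.commutes a)
  obtain ⟨ρ, ψ, J, hρ, hψ, hψC, hψk, hJ, hJψ⟩ := aux_psi t Φ hΦ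
  let FF : IntermediateField (RatFunc κ) N := (auxFF ψ hψ hψk).comap N.val
  obtain ⟨hfin, hse⟩ := hsep N _ _ φ hφs hφev
  have hA0Ω : Function.Injective (algebraMap (MvPolynomial (Fin n) κ[X]) Ω) := by
    rw [IsScalarTower.algebraMap_eq _ K Ω]
    exact (algebraMap K Ω).injective.comp (IsFractionRing.injective _ K)
  have hinj := auxJ_injF (κ := κ) (n := n) (Ω := Ω) hA0Ω
  refine ⟨N, φ, FF, ?_, ?_⟩
  · intro b b' h
    rw [hφ]
    have : b' = inc b := Subtype.ext h
    rw [this]; rfl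
  refine ⟨fun a => MvPolynomial.eval_C _, hφs, hevs, hφev, hse, hfin, ?_, ?_, ?_⟩
  · intro x hx
    by_contra hne
    refine RatFunc.transcendental_of_ne_C x ?_ hx
    rintro ⟨c, hc⟩
    exact hne ⟨c, hc.symm⟩
  · intro z hz
    obtain ⟨r, hr⟩ := aux_l8 ρ hρ (z : R) (hz.map (N.val.restrictScalars κ) Subtype.val_injective)
    exact ⟨C r, 1, one_ne_zero, by rw [map_one, mul_one, hψC, hr]; rfl⟩
  · intro U
    obtain ⟨θ0, f, hfm, hf0, hθ, ⟨a, b, Δ, hab, hΔ⟩, h, hhm, hh0, halt⟩ := hU U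
    let ι : MvPolynomial (Fin n) κ[X] →+* integralClosure (MvPolynomial (Fin n) (RatFunc κ)) M :=
      (algebraMap (MvPolynomial (Fin n) (RatFunc κ)) _).comp (algebraMap _ _)
    have hι : ((integralClosure (MvPolynomial (Fin n) (RatFunc κ)) M).val : _ →+* M).comp ι =
        algebraMap (MvPolynomial (Fin n) κ[X]) M := by
      refine RingHom.ext fun x => ?_
      apply Subtype.ext
      exact (IsScalarTower.algebraMap_apply (MvPolynomial (Fin n) κ[X])
        (MvPolynomial (Fin n) (RatFunc κ)) Ω x).symm
    have hθi : θ0 ∈ integralClosure (MvPolynomial (Fin n) (RatFunc κ)) M := by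
      rw [mem_integralClosure_iff]
      refine ⟨f.map (algebraMap _ _), hfm.map _, ?_⟩
      rw [eval₂_map, ← hf0, ← hι]
      rfl
    have hroot : ∀ (γ : M ≃ₐ[K] M) (θ' : integralClosure (MvPolynomial (Fin n) (RatFunc κ)) M),
        (θ' : M) = γ θ0 → f.eval₂ ι θ' = 0 := by
      intro γ θ' h'
      apply Subtype.val_injective
      have e1 := hom_eval₂ f ι ((integralClosure (MvPolynomial (Fin n) (RatFunc κ)) M).val : _ →+* M) θ'
      rw [hι] at e1
      refine e1.trans ?_
      have e2 := hom_eval₂ f (algebraMap (MvPolynomial (Fin n) κ[X]) M) (γ : M →+* M) θ0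
      rw [hf0, map_zero] at e2
      have e3 : (γ : M →+* M).comp (algebraMap (MvPolynomial (Fin n) κ[X]) M) = algebraMap _ M := by
        refine RingHom.ext fun x => ?_
        rw [RingHom.comp_apply, IsScalarTower.algebraMap_apply _ K M]
        exact γ.commutes _
      rw [e3] at e2
      have e4 : ((integralClosure (MvPolynomial (Fin n) (RatFunc κ)) M).val : _ →+* M) θ' = γ θ0 := h'
      rw [e4]
      exact e2.symm
    refine ⟨⟨θ0, hθi⟩, fun γ hγ => (hθ γ).mpr hγ, ?_, ?_⟩
    · intro γ θ' h1 h2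
      have := aux_star ι φ f a b Δ hab (by
        simp only [ι, RingHom.comp_apply]
        rw [hφev]
        exact (_root_.map_ne_zero _).mpr hΔ) ⟨θ0, hθi⟩ θ' (hroot 1 _ rfl) (hroot γ _ h1) h2
      rw [← hθ, ← h1, this]
    · rintro ⟨p, q, hq, hpq⟩ γ hγ
      have hpq' : Φ (inc ⟨θ0, hθi⟩) * ψ q = ψ p := by rw [← hpq]; congr 1; exact (hφ _).symm
      have h0 : h.eval₂ J (inc ⟨θ0, hθi⟩) = 0 := by
        apply Subtype.val_injective
        refine (hom_eval₂ h J ((integralClosure (MvPolynomial (Fin n) (RatFunc κ)) Ω).val : _ →+* Ω)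
          (inc ⟨θ0, hθi⟩)).trans ?_
        have e1 : ((integralClosure (MvPolynomial (Fin n) (RatFunc κ)) Ω).val : _ →+* Ω).comp J =
            auxJ (auxT0 κ n Ω) (auxX0 κ n Ω) := RingHom.ext hJ
        rw [e1]
        exact hh0
      have h1 : (h.map (auxEvF _ t)).eval₂ ψ (Φ (inc ⟨θ0, hθi⟩)) = 0 := by
        have e1 : ψ.comp (auxEvF _ t) = Φ.comp J := RingHom.ext fun x => (hJψ x).symm
        rw [eval₂_map, e1, ← hom_eval₂, h0, map_zero]
      obtain ⟨y, hy⟩ := aux_y ψ hψ _ (hhm.map _) _ h1 p q hq hpq'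
      rw [hy, eval₂_at_apply, map_eq_zero_iff _ hψ] at h1
      rcases halt with ⟨P, hP⟩ | halt
      · exact aux_galU hinj M U θ0 hθ P hP γ hγ
      · exact absurd h1 (halt y)
end

end PartV
section PartVI
universe uN
open Polynomial
section
attribute [local instance] MvPolynomial.algebraMvPolynomial

lemma aux_frac (σ R k K : Type*) [CommRing R] [IsDomain R] [Field k] [Algebra R k] [IsFractionRing R k]
    [Field K] [Algebra (MvPolynomial σ k) K] [IsFractionRing (MvPolynomial σ k) K]
    [Algebra (MvPolynomial σ R) K] [IsScalarTower (MvPolynomial σ R) (MvPolynomial σ k) K] :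
    IsFractionRing (MvPolynomial σ R) K := by
  have hi : Function.Injective (algebraMap (MvPolynomial σ R) (MvPolynomial σ k)) := by
    rw [MvPolynomial.algebraMap_def]
    exact MvPolynomial.map_injective _ (IsFractionRing.injective R k)
  haveI : FaithfulSMul (MvPolynomial σ R) K := by
    rw [faithfulSMul_iff_algebraMap_injective, IsScalarTower.algebraMap_eq _ (MvPolynomial σ k) K]
    exact (IsFractionRing.injective _ K).comp hi
  have hloc := MvPolynomial.isLocalization (σ := σ) (nonZeroDivisors R) k
  have hc : ∀ a : MvPolynomial σ k, ∃ x y : MvPolynomial σ R, y ≠ 0 ∧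
      a * algebraMap _ _ y = algebraMap _ _ x := by
    intro a
    obtain ⟨⟨x, ⟨y, hy⟩⟩, h⟩ := IsLocalization.surj (Submonoid.map (MvPolynomial.C (σ := σ)) (nonZeroDivisors R)) a
    refine ⟨x, y, ?_, h⟩
    obtain ⟨r, hr, rfl⟩ := hy
    rw [Ne, MvPolynomial.C_eq_zero]
    exact nonZeroDivisors.ne_zero hr
  apply IsFractionRing.of_field
  intro z
  obtain ⟨a, b, hb, rfl⟩ := IsFractionRing.div_surjective (A := MvPolynomial σ k) z
  obtain ⟨x, y, hy, h⟩ := hc a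
  obtain ⟨x', y', hy', h'⟩ := hc b
  refine ⟨x * y', y * x', ?_⟩
  have e : ∀ c : MvPolynomial σ R, algebraMap _ K c = algebraMap (MvPolynomial σ k) K (algebraMap _ _ c) :=
    fun c => IsScalarTower.algebraMap_apply _ _ _ c
  have n0 : ∀ c : MvPolynomial σ R, c ≠ 0 → algebraMap (MvPolynomial σ k) K (algebraMap _ _ c) ≠ 0 := by
    intro c hc
    rw [Ne, map_eq_zero_iff _ (IsFractionRing.injective _ K), map_eq_zero_iff _ hi]
    exact hc
  have hb0 : algebraMap (MvPolynomial σ k) K b ≠ 0 := by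
    rw [Ne, map_eq_zero_iff _ (IsFractionRing.injective _ K)]
    exact nonZeroDivisors.ne_zero hb
  simp only [e, map_mul, ← h, ← h']
  have := n0 y hy
  have := n0 y' hy'
  field_simp
end

lemma aux_ker {k : Type*} [Field k] {n : ℕ} (t : Fin n → k) :
    RingHom.ker (MvPolynomial.eval t) =
      Ideal.span (Set.range fun i => MvPolynomial.X i - MvPolynomial.C (t i)) := by
  apply le_antisymm
  · intro p hp
    rw [RingHom.mem_ker] at hp
    set I := Ideal.span (Set.range fun i => (MvPolynomial.X i - MvPolynomial.C (t i) : MvPolynomial (Fin n) k))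
    have : Ideal.Quotient.mk I = ((Ideal.Quotient.mk I).comp MvPolynomial.C).comp (MvPolynomial.eval t) := by
      apply MvPolynomial.ringHom_ext
      · intro r; simp
      · intro i
        simp only [RingHom.comp_apply, MvPolynomial.eval_X]
        rw [Ideal.Quotient.eq]
        exact Ideal.subset_span ⟨i, rfl⟩
    rw [← Ideal.Quotient.eq_zero_iff_mem, this, RingHom.comp_apply, hp, map_zero]
  · rw [Ideal.span_le]
    rintro _ ⟨i, rfl⟩
    simp [RingHom.mem_ker]

lemma aux_R {A k : Type*} {B : Type uN} [CommRing A] [CommRing B] [Field k] [Algebra A B]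
    [Algebra.IsIntegral A B] (hinj : Function.Injective (algebraMap A B)) (ev : A →+* k)
    (hev : Function.Surjective ev) :
    ∃ (R : Type uN) (_ : Field R) (_ : Algebra k R) (Φ : B →+* R),
      ∀ a, Φ (algebraMap A B a) = algebraMap k R (ev a) := by
  haveI : (RingHom.ker ev).IsMaximal := RingHom.ker_isMaximal_of_surjective ev hev
  obtain ⟨Q, hQ, hQc⟩ := Ideal.exists_ideal_over_maximal_of_isIntegral (S := B) (RingHom.ker ev)
    (by rw [(RingHom.injective_iff_ker_eq_bot _).mp hinj]; exact bot_le)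
  let l : k →+* B ⧸ Q := RingHom.liftOfSurjective ev hev
    ⟨(Ideal.Quotient.mk Q).comp (algebraMap A B), by
      intro a ha
      rw [← hQc, Ideal.mem_comap] at ha
      rw [RingHom.mem_ker, RingHom.comp_apply]
      exact Ideal.Quotient.eq_zero_iff_mem.mpr ha⟩
  have hl : ∀ a, l (ev a) = Ideal.Quotient.mk Q (algebraMap A B a) := fun a =>
    RingHom.liftOfSurjective_comp_apply ev hev _ a
  refine ⟨B ⧸ Q, Ideal.Quotient.field Q, l.toAlgebra, Ideal.Quotient.mk Q, fun a => ?_⟩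
  exact (hl a).symm

section
variable {κ : Type*} [Field κ] {n : ℕ} {K : Type*} {Ω : Type uN} [Field K] [Field Ω]
  [Algebra (MvPolynomial (Fin n) (RatFunc κ)) K]
  [IsFractionRing (MvPolynomial (Fin n) (RatFunc κ)) K]
  [Algebra K Ω] [Algebra (MvPolynomial (Fin n) (RatFunc κ)) Ω]
  [Algebra κ Ω] [Algebra κ K]
  [IsScalarTower (MvPolynomial (Fin n) (RatFunc κ)) K Ω]
  [IsScalarTower κ K Ω] [IsScalarTower κ (MvPolynomial (Fin n) (RatFunc κ)) Ω]
  [IsAlgClosed Ω] [Algebra.IsAlgebraic K Ω]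

attribute [local instance] MvPolynomial.algebraMvPolynomial in
theorem aux_p3 (M : IntermediateField K Ω) [FiniteDimensional K M] [IsGalois K M] :
    ∃ (t : Fin n → RatFunc κ) (R : Type uN) (_ : Field R) (_ : Algebra (RatFunc κ) R) (_ : Algebra κ R)
      (_ : IsScalarTower κ (RatFunc κ) R)
      (N : IntermediateField (RatFunc κ) R)
        (φ : integralClosure (MvPolynomial (Fin n) (RatFunc κ)) M →+* N)
        (FF : IntermediateField (RatFunc κ) N),
        AuxSpec κ (RatFunc κ) (MvPolynomial (Fin n) (RatFunc κ)) K M N (MvPolynomial.eval t) φ FF := by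
  letI i1 : Algebra (MvPolynomial (Fin n) κ[X]) K :=
    ((algebraMap (MvPolynomial (Fin n) (RatFunc κ)) K).comp (algebraMap _ _)).toAlgebra
  haveI i2 : IsScalarTower (MvPolynomial (Fin n) κ[X]) (MvPolynomial (Fin n) (RatFunc κ)) K :=
    IsScalarTower.of_algebraMap_eq (fun x => rfl)
  letI i3 : Algebra (MvPolynomial (Fin n) κ[X]) Ω :=
    ((algebraMap (MvPolynomial (Fin n) (RatFunc κ)) Ω).comp (algebraMap _ _)).toAlgebra
  haveI i4 : IsScalarTower (MvPolynomial (Fin n) κ[X]) (MvPolynomial (Fin n) (RatFunc κ)) Ω :=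
    IsScalarTower.of_algebraMap_eq (fun x => rfl)
  haveI i5 : IsScalarTower (MvPolynomial (Fin n) κ[X]) K Ω :=
    IsScalarTower.of_algebraMap_eq (fun x => by
      rw [IsScalarTower.algebraMap_apply _ (MvPolynomial (Fin n) (RatFunc κ)) Ω,
        IsScalarTower.algebraMap_apply _ (MvPolynomial (Fin n) (RatFunc κ)) K,
        ← IsScalarTower.algebraMap_apply (MvPolynomial (Fin n) (RatFunc κ)) K Ω])
  haveI i6 : IsFractionRing (MvPolynomial (Fin n) κ[X]) K := aux_frac (Fin n) κ[X] (RatFunc κ) K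
  obtain ⟨t, ht⟩ := aux_p2.{uN} (κ := κ) (n := n) M
  have hinj : Function.Injective (algebraMap (MvPolynomial (Fin n) (RatFunc κ))
      (integralClosure (MvPolynomial (Fin n) (RatFunc κ)) Ω)) := by
    intro x y hxy
    have h1 := congrArg (Subtype.val) hxy
    have h2 : algebraMap (MvPolynomial (Fin n) (RatFunc κ)) Ω x = algebraMap _ Ω y := h1
    rw [IsScalarTower.algebraMap_apply _ K Ω x, IsScalarTower.algebraMap_apply _ K Ω y] at h2
    exact IsFractionRing.injective _ K ((algebraMap K Ω).injective h2)
  obtain ⟨R, _, _, Φ, hΦ⟩ := aux_R hinj (auxEv κ t)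
    (fun r => ⟨MvPolynomial.C r, MvPolynomial.eval_C _⟩)
  letI : Algebra κ R := ((algebraMap (RatFunc κ) R).comp (algebraMap κ _)).toAlgebra
  haveI : IsScalarTower κ (RatFunc κ) R := IsScalarTower.of_algebraMap_eq (fun x => rfl)
  obtain ⟨N, φ, FF, -, H⟩ := ht R Φ hΦ
  exact ⟨_, R, _, _, _, inferInstance, N, φ, FF, H⟩

theorem aux_final (E : IntermediateField K Ω) [FiniteDimensional K E] [Algebra.IsSeparable K E] :
    ∃ (t : Fin n → RatFunc κ)
      (P : Ideal (integralClosure (MvPolynomial (Fin n) (RatFunc κ)) E)) (_ : P.IsMaximal),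
      Ideal.comap (algebraMap (MvPolynomial (Fin n) (RatFunc κ))
          (integralClosure (MvPolynomial (Fin n) (RatFunc κ)) E)) P =
        Ideal.span (Set.range fun i => MvPolynomial.X i - MvPolynomial.C (t i)) ∧
      ∀ [Algebra (RatFunc κ) (integralClosure (MvPolynomial (Fin n) (RatFunc κ)) E ⧸ P)]
        [Algebra κ (integralClosure (MvPolynomial (Fin n) (RatFunc κ)) E ⧸ P)]
        (_ : ∀ r, algebraMap (RatFunc κ) (integralClosure (MvPolynomial (Fin n) (RatFunc κ)) E ⧸ P) r =
          Ideal.Quotient.mk P (algebraMap (MvPolynomial (Fin n) (RatFunc κ)) _ (MvPolynomial.C r)))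
        (_ : ∀ r, algebraMap κ (integralClosure (MvPolynomial (Fin n) (RatFunc κ)) E ⧸ P) r =
          Ideal.Quotient.mk P (algebraMap (MvPolynomial (Fin n) (RatFunc κ)) _ (algebraMap κ _ r))),
      FiniteDimensional (RatFunc κ) (integralClosure (MvPolynomial (Fin n) (RatFunc κ)) E ⧸ P) ∧
      Algebra.IsSeparable (RatFunc κ) (integralClosure (MvPolynomial (Fin n) (RatFunc κ)) E ⧸ P) ∧
      (∃ Ψ : (E ≃ₐ[K] E) ≃* ((integralClosure (MvPolynomial (Fin n) (RatFunc κ)) E ⧸ P) ≃ₐ[RatFunc κ]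
          (integralClosure (MvPolynomial (Fin n) (RatFunc κ)) E ⧸ P)),
        ∀ σ (b b' : integralClosure (MvPolynomial (Fin n) (RatFunc κ)) E), (b' : E) = σ b →
          Ψ σ (Ideal.Quotient.mk P b) = Ideal.Quotient.mk P b') ∧
      ∀ (S : Subalgebra (RatFunc κ) (integralClosure (MvPolynomial (Fin n) (RatFunc κ)) E ⧸ P)),
        (∀ c : integralClosure (MvPolynomial (Fin n) (RatFunc κ)) E, IsAlgebraic κ (c : E) →
          Ideal.Quotient.mk P c ∈ S) → ∀ z, IsAlgebraic κ z → z ∈ S := by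
  obtain ⟨M, hEM, _, _⟩ : ∃ M : IntermediateField K Ω, E ≤ M ∧ FiniteDimensional K M ∧ IsGalois K M := by
    haveI : IsAlgClosure K Ω := ⟨inferInstance, inferInstance⟩
    haveI : Normal K Ω := IsAlgClosure.normal K Ω
    refine ⟨IntermediateField.normalClosure K E Ω, IntermediateField.le_normalClosure E,
      normalClosure.is_finiteDimensional K E Ω, ?_⟩
    have hsep : IntermediateField.normalClosure K E Ω ≤ separableClosure K Ω := by
      rw [_root_.normalClosure_le_iff]
      rintro f _ ⟨x, rfl⟩
      exact mem_separableClosure_iff.mpr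
        ((Algebra.IsSeparable.isSeparable K x).map f f.injective)
    haveI := le_separableClosure_iff K Ω _ |>.mp hsep
    exact IsGalois.mk
  letI : Algebra E M := (IntermediateField.inclusion hEM).toAlgebra
  haveI : IsScalarTower K E M := IsScalarTower.of_algebraMap_eq (fun x => rfl)
  haveI : IsScalarTower (MvPolynomial (Fin n) (RatFunc κ)) E M :=
    IsScalarTower.of_algebraMap_eq (fun x => rfl)
  haveI : IsScalarTower κ E M := IsScalarTower.of_algebraMap_eq (fun x => rfl)
  haveI : IsScalarTower κ (MvPolynomial (Fin n) (RatFunc κ)) M :=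
    IsScalarTower.of_algebraMap_eq (fun x => Subtype.ext
      (IsScalarTower.algebraMap_apply κ (MvPolynomial (Fin n) (RatFunc κ)) Ω x))
  obtain ⟨t, R, _, _, _, _, N, φ, FF, H⟩ := aux_p3 (κ := κ) (n := n) M
  let inc : integralClosure (MvPolynomial (Fin n) (RatFunc κ)) E →ₐ[MvPolynomial (Fin n) (RatFunc κ)]
    integralClosure (MvPolynomial (Fin n) (RatFunc κ)) M :=
    ((IntermediateField.inclusion hEM).restrictScalars (MvPolynomial (Fin n) (RatFunc κ))).mapIntegralClosure
  let g : integralClosure (MvPolynomial (Fin n) (RatFunc κ)) E →+* N := φ.comp (inc : _ →+* _)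
  have hg : ∀ a, g (algebraMap (MvPolynomial (Fin n) (RatFunc κ)) _ a) =
      algebraMap _ N (MvPolynomial.eval t a) := fun a => by
    rw [← H.hev]
    exact congrArg φ (inc.commutes a)
  let P := RingHom.ker g
  have hPc : Ideal.comap (algebraMap (MvPolynomial (Fin n) (RatFunc κ))
          (integralClosure (MvPolynomial (Fin n) (RatFunc κ)) E)) P = RingHom.ker (MvPolynomial.eval t) := by
    ext a
    rw [Ideal.mem_comap, RingHom.mem_ker, hg, RingHom.mem_ker, map_eq_zero]
  haveI hPp : P.IsPrime := RingHom.ker_isPrime g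
  haveI hPm : P.IsMaximal := by
    apply Ideal.isMaximal_of_isIntegral_of_isMaximal_comap (R := MvPolynomial (Fin n) (RatFunc κ))
    rw [hPc]
    exact RingHom.ker_isMaximal_of_surjective _ H.evs
  refine ⟨t, P, hPm, hPc.trans (aux_ker t), ?_⟩
  intro ik iκ hk hκ
  letI : Field (integralClosure (MvPolynomial (Fin n) (RatFunc κ)) E ⧸ P) := Ideal.Quotient.field P
  letI : Algebra (integralClosure (MvPolynomial (Fin n) (RatFunc κ)) E ⧸ P) N :=
    (Ideal.Quotient.lift P g (fun a ha => ha)).toAlgebra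
  haveI : IsScalarTower (RatFunc κ) (integralClosure (MvPolynomial (Fin n) (RatFunc κ)) E ⧸ P) N :=
    IsScalarTower.of_algebraMap_eq (fun r => by
      rw [hk]
      refine Eq.trans ?_ (hg _).symm
      rw [MvPolynomial.eval_C])
  haveI : IsScalarTower κ (integralClosure (MvPolynomial (Fin n) (RatFunc κ)) E ⧸ P) N :=
    IsScalarTower.of_algebraMap_eq (fun r => by
      rw [hκ]
      refine Eq.trans ?_ (hg _).symm
      rw [H.evκ, ← IsScalarTower.algebraMap_apply])
  have hs : Function.Surjective (Ideal.Quotient.mk P) := Ideal.Quotient.mk_surjective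
  have hπφ : ∀ (b : integralClosure (MvPolynomial (Fin n) (RatFunc κ)) E)
      (b' : integralClosure (MvPolynomial (Fin n) (RatFunc κ)) M), (b' : M) = algebraMap E M b →
      φ b' = algebraMap (integralClosure (MvPolynomial (Fin n) (RatFunc κ)) E ⧸ P) N
        (Ideal.Quotient.mk P b) := by
    intro b b' h
    have : b' = inc b := Subtype.ext h
    rw [this]; rfl
  haveI := H.fin
  haveI := H.sep
  have hfin : FiniteDimensional (RatFunc κ) (integralClosure (MvPolynomial (Fin n) (RatFunc κ)) E ⧸ P) :=
    FiniteDimensional.left _ _ N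
  refine ⟨hfin, Algebra.isSeparable_tower_bot_of_isSeparable _ _ N,
    aux_iso H (Ideal.Quotient.mk P) hs hπφ, fun S hS z hz => ?_⟩
  exact aux_reg H (Ideal.Quotient.mk P) hπφ z hz (S.toIntermediateField (fun x hx =>
    Subalgebra.inv_mem_of_algebraic S (x := ⟨x, hx⟩) (Algebra.IsAlgebraic.isAlgebraic x))) hS hs
end

end PartVI

set_option maxHeartbeats 8000000

/-- **Specialization preserving regularity over `k = κ(T)`** (Proposition `lemma:0`(2)).
Let `κ` be a field, `k = κ(T) = RatFunc κ`, and `α : G → Aut(L/k)` a finite embedding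
problem over `k`, with `L` realized inside a fixed algebraic closure `Ω` of
`k(T₁,…,Tₙ)`.  Suppose the induced embedding problem `α_{k(T₁,…,Tₙ)}` has a solution `β`
with solution field `E ⊆ Ω` satisfying `E ∩ κ̄ = L ∩ κ̄` (every element of `E` algebraic
over `κ` lies in `L`).  Let `B` be the integral closure of `k[T₁,…,Tₙ]` in `E` (the
hypothesis `hLB` records the fact that `L ⊆ B`).  Then there are `t ∈ kⁿ` and a maximal
ideal `P` of `B` lying over `⟨T₁ − t₁, …, Tₙ − tₙ⟩` such that the residue field
`E_t = B ⧸ P` is the solution field of a solution to `α` which moreover is regular: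
every element of `E_t` algebraic over `κ` lies in (the image of) `L`. -/
theorem statement_5 (κ : Type) [Field κ]
    (G : Type) [Group G] [Finite G] (n : ℕ) (hn : 0 < n)
    (L : IntermediateField (RatFunc κ)
      (AlgebraicClosure (FractionRing (MvPolynomial (Fin n) (RatFunc κ)))))
    [FiniteDimensional (RatFunc κ) L] [Algebra.IsSeparable (RatFunc κ) L]
    (α : G →* (L ≃ₐ[RatFunc κ] L)) (hα : Function.Surjective α)
    (E : IntermediateField (FractionRing (MvPolynomial (Fin n) (RatFunc κ)))
      (AlgebraicClosure (FractionRing (MvPolynomial (Fin n) (RatFunc κ)))))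
    [FiniteDimensional (FractionRing (MvPolynomial (Fin n) (RatFunc κ))) E]
    [Algebra.IsSeparable (FractionRing (MvPolynomial (Fin n) (RatFunc κ))) E]
    (hLE : (L : Set (AlgebraicClosure (FractionRing (MvPolynomial (Fin n) (RatFunc κ)))))
      ⊆ (E : Set (AlgebraicClosure (FractionRing (MvPolynomial (Fin n) (RatFunc κ))))))
    (β : (E ≃ₐ[FractionRing (MvPolynomial (Fin n) (RatFunc κ))] E) ≃* G)
    (hβ : ∀ (σ : E ≃ₐ[FractionRing (MvPolynomial (Fin n) (RatFunc κ))] E)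
        (x : AlgebraicClosure (FractionRing (MvPolynomial (Fin n) (RatFunc κ))))
        (hx : x ∈ L),
      ((σ ⟨x, hLE hx⟩ : E)
          : AlgebraicClosure (FractionRing (MvPolynomial (Fin n) (RatFunc κ)))) =
        ((α (β σ) ⟨x, hx⟩ : L)
          : AlgebraicClosure (FractionRing (MvPolynomial (Fin n) (RatFunc κ)))))
    (hreg : ∀ x : AlgebraicClosure (FractionRing (MvPolynomial (Fin n) (RatFunc κ))),
      x ∈ E → IsAlgebraic κ x → x ∈ L)
    (hLB : ∀ (x : AlgebraicClosure (FractionRing (MvPolynomial (Fin n) (RatFunc κ))))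
        (hx : x ∈ L),
      (⟨x, hLE hx⟩ : E) ∈ integralClosure (MvPolynomial (Fin n) (RatFunc κ)) E) :
    ∃ (t : Fin n → RatFunc κ)
      (P : Ideal (integralClosure (MvPolynomial (Fin n) (RatFunc κ)) E))
      (_ : P.IsMaximal),
      Ideal.comap (algebraMap (MvPolynomial (Fin n) (RatFunc κ))
          (integralClosure (MvPolynomial (Fin n) (RatFunc κ)) E)) P =
        Ideal.span (Set.range fun i => MvPolynomial.X i - MvPolynomial.C (t i)) ∧
      haveI : IsScalarTower (RatFunc κ) (MvPolynomial (Fin n) (RatFunc κ)) E :=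
        ⟨fun a b c => Subtype.ext (smul_assoc a b
          (c : AlgebraicClosure (FractionRing (MvPolynomial (Fin n) (RatFunc κ)))))⟩
      haveI : IsScalarTower κ (MvPolynomial (Fin n) (RatFunc κ)) E :=
        ⟨fun a b c => Subtype.ext (smul_assoc a b
          (c : AlgebraicClosure (FractionRing (MvPolynomial (Fin n) (RatFunc κ)))))⟩
      FiniteDimensional (RatFunc κ)
        (integralClosure (MvPolynomial (Fin n) (RatFunc κ)) E ⧸ P) ∧
      Algebra.IsSeparable (RatFunc κ)
        (integralClosure (MvPolynomial (Fin n) (RatFunc κ)) E ⧸ P) ∧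
      ∃ β' : ((integralClosure (MvPolynomial (Fin n) (RatFunc κ)) E ⧸ P) ≃ₐ[RatFunc κ]
          (integralClosure (MvPolynomial (Fin n) (RatFunc κ)) E ⧸ P)) ≃* G,
        (∀ (σ : (integralClosure (MvPolynomial (Fin n) (RatFunc κ)) E ⧸ P) ≃ₐ[RatFunc κ]
            (integralClosure (MvPolynomial (Fin n) (RatFunc κ)) E ⧸ P))
          (x : AlgebraicClosure (FractionRing (MvPolynomial (Fin n) (RatFunc κ))))
          (hx : x ∈ L),
          σ (Ideal.Quotient.mk P ⟨⟨x, hLE hx⟩, hLB x hx⟩) =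
            Ideal.Quotient.mk P ⟨⟨((α (β' σ) ⟨x, hx⟩ : L)
                : AlgebraicClosure (FractionRing (MvPolynomial (Fin n) (RatFunc κ)))),
              hLE (α (β' σ) ⟨x, hx⟩).2⟩,
              hLB _ (α (β' σ) ⟨x, hx⟩).2⟩) ∧
        (∀ z : integralClosure (MvPolynomial (Fin n) (RatFunc κ)) E ⧸ P,
          IsAlgebraic κ z →
            ∃ (x : AlgebraicClosure (FractionRing (MvPolynomial (Fin n) (RatFunc κ))))
              (hx : x ∈ L),
              z = Ideal.Quotient.mk P ⟨⟨x, hLE hx⟩, hLB x hx⟩) := by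
  have h := @aux_final κ _ n (FractionRing (MvPolynomial (Fin n) (RatFunc κ)))
    (AlgebraicClosure (FractionRing (MvPolynomial (Fin n) (RatFunc κ)))) _ _ _ _ _ _ _ _ _ _ _ _ _ E _ _
  refine h.imp fun t h => ?_
  refine h.imp fun P h => ?_
  refine h.imp fun hP h => ?_
  refine h.imp_right fun hall => ?_
  haveI i1 : IsScalarTower (RatFunc κ) (MvPolynomial (Fin n) (RatFunc κ)) E :=
        ⟨fun a b c => Subtype.ext (smul_assoc a b
          (c : AlgebraicClosure (FractionRing (MvPolynomial (Fin n) (RatFunc κ)))))⟩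
  haveI i2 : IsScalarTower κ (MvPolynomial (Fin n) (RatFunc κ)) E :=
        ⟨fun a b c => Subtype.ext (smul_assoc a b
          (c : AlgebraicClosure (FractionRing (MvPolynomial (Fin n) (RatFunc κ)))))⟩
  have hk : ∀ r, algebraMap (RatFunc κ) (integralClosure (MvPolynomial (Fin n) (RatFunc κ)) E ⧸ P) r =
      Ideal.Quotient.mk P (algebraMap (MvPolynomial (Fin n) (RatFunc κ)) _ (MvPolynomial.C r)) := by
    intro r
    exact congrArg (Ideal.Quotient.mk P) (Subtype.ext
      (IsScalarTower.algebraMap_apply (RatFunc κ) (MvPolynomial (Fin n) (RatFunc κ)) E r))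
  have hκ : ∀ r, algebraMap κ (integralClosure (MvPolynomial (Fin n) (RatFunc κ)) E ⧸ P) r =
      Ideal.Quotient.mk P (algebraMap (MvPolynomial (Fin n) (RatFunc κ)) _ (algebraMap κ _ r)) := by
    intro r
    exact congrArg (Ideal.Quotient.mk P) (Subtype.ext
      (IsScalarTower.algebraMap_apply κ (MvPolynomial (Fin n) (RatFunc κ)) E r))
  have h2 := hall hk hκ
  refine h2.imp_right fun h2 => h2.imp_right fun h2 => ?_
  have hS := h2.2
  refine h2.1.elim fun Ψ hΨ => ?_
  refine ⟨Ψ.symm.trans β, ?_, ?_⟩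
  · intro σ x hx
    have h1 := hΨ (Ψ.symm σ) ⟨⟨x, hLE hx⟩, hLB x hx⟩
      ⟨⟨((α (β (Ψ.symm σ)) ⟨x, hx⟩ : L) : _), hLE (α (β (Ψ.symm σ)) ⟨x, hx⟩).2⟩,
        hLB _ (α (β (Ψ.symm σ)) ⟨x, hx⟩).2⟩ (Subtype.ext (hβ (Ψ.symm σ) x hx).symm)
    rw [Ψ.apply_symm_apply] at h1
    exact h1
  · let S : Subalgebra (RatFunc κ) (integralClosure (MvPolynomial (Fin n) (RatFunc κ)) E ⧸ P) :=
      { carrier := {z | ∃ (x : AlgebraicClosure (FractionRing (MvPolynomial (Fin n) (RatFunc κ))))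
              (hx : x ∈ L),
              z = Ideal.Quotient.mk P ⟨⟨x, hLE hx⟩, hLB x hx⟩}
        mul_mem' := by
          rintro _ _ ⟨x, hx, rfl⟩ ⟨y, hy, rfl⟩
          exact ⟨x * y, mul_mem hx hy, (map_mul (Ideal.Quotient.mk P) _ _).symm⟩
        add_mem' := by
          rintro _ _ ⟨x, hx, rfl⟩ ⟨y, hy, rfl⟩
          exact ⟨x + y, add_mem hx hy, (map_add (Ideal.Quotient.mk P) _ _).symm⟩
        algebraMap_mem' := fun r => ⟨algebraMap _ _ r, L.algebraMap_mem r, rfl⟩ }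
    intro z hz
    refine hS S (fun c hc => ⟨((c : E) : _), ?_, rfl⟩) z hz
    apply hreg _ (c : E).2
    exact hc.algHom (E.val.restrictScalars κ)
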